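/- arXiv:1003.5388 — 8 statements merged into one kernel-verified Lean document; each statement's English description precedes it below -/
import Mathlib

section
/- Let f : ℕ → ℤ be a completely multiplicative function taking values in {-1, 1}, and let c ∈ [-1, 0) be a real number. If the series ∑_p (c - f(p))/p over primes p converges, then ∑_{n ≤ x} μ(n) f(n)/n → ∞ as x → ∞, where μ is the Möbius function. -/
theorem aux_log_factorial (N : ℕ) : ∑ n ∈ Finset.Ioc 0 N, Real.log n = Real.log (N.factorial) := by
  induction N with
  | zero => simp
  | succ n ih =>
    rw [Finset.sum_Ioc_succ_top (by omega), ih, Nat.factorial_succ, Nat.cast_mul, Real.log_mul]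
    · ring
    · positivity
    · positivity

theorem aux_mertens_upper (N : ℕ) (hN : 1 ≤ N) :
    ∑ p ∈ (N+1).primesBelow, Real.log p / p ≤ Real.log N + (Real.log 4 + 4) := by
  have hN' : (0:ℝ) < N := by exact_mod_cast hN
  have h1 : ∑ n ∈ Finset.Ioc 0 N, ArithmeticFunction.vonMangoldt n * ((N / n : ℕ) : ℝ)
      = Real.log (N.factorial) := by
    rw [← ArithmeticFunction.sum_Ioc_mul_zeta_eq_sum, ArithmeticFunction.vonMangoldt_mul_zeta,
      ← aux_log_factorial]
    simp [ArithmeticFunction.log_apply]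
  have h2 : Real.log (N.factorial) ≤ N * Real.log N := by
    rw [← Real.log_pow]
    apply Real.log_le_log (by positivity)
    exact_mod_cast Nat.factorial_le_pow N
  have h3 := Chebyshev.psi_le_const_mul_self (x := (N:ℝ)) (by positivity)
  have h4 : (N:ℝ) * ∑ n ∈ Finset.Ioc 0 N, ArithmeticFunction.vonMangoldt n / n
      ≤ Real.log (N.factorial) + Chebyshev.psi N := by
    rw [← h1, Chebyshev.psi, Nat.floor_natCast, ← Finset.sum_add_distrib, Finset.mul_sum]
    apply Finset.sum_le_sum
    intro n hn
    have hn0 : 0 < n := (Finset.mem_Ioc.mp hn).1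
    have : (N:ℝ) / n ≤ ((N / n : ℕ) : ℝ) + 1 := by
      rw [← Nat.floor_div_eq_div (K := ℝ)]
      exact (Nat.lt_floor_add_one _).le
    have h5 : (0:ℝ) ≤ ArithmeticFunction.vonMangoldt n := ArithmeticFunction.vonMangoldt_nonneg
    calc (N:ℝ) * (ArithmeticFunction.vonMangoldt n / n)
        = ArithmeticFunction.vonMangoldt n * ((N:ℝ) / n) := by ring
      _ ≤ ArithmeticFunction.vonMangoldt n * (((N / n : ℕ) : ℝ) + 1) := by gcongr
      _ = _ := by ring
  have h5 : ∑ p ∈ (N+1).primesBelow, Real.log p / p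
      ≤ ∑ n ∈ Finset.Ioc 0 N, ArithmeticFunction.vonMangoldt n / n := by
    calc ∑ p ∈ (N+1).primesBelow, Real.log p / p
        = ∑ p ∈ (N+1).primesBelow, ArithmeticFunction.vonMangoldt p / p := by
          apply Finset.sum_congr rfl
          intro p hp
          rw [ArithmeticFunction.vonMangoldt_apply_prime (Nat.prime_of_mem_primesBelow hp)]
      _ ≤ _ := by
          apply Finset.sum_le_sum_of_subset_of_nonneg
          · intro p hp
            have := Nat.mem_primesBelow.mp hp
            have := this.2.pos
            simp; omega
          · intro n _ _
            have := ArithmeticFunction.vonMangoldt_nonneg (n := n)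
            positivity
  have h6 : (N:ℝ) * ∑ p ∈ (N+1).primesBelow, Real.log p / p
      ≤ N * (Real.log N + (Real.log 4 + 4)) := by
    nlinarith [mul_le_mul_of_nonneg_left h5 hN'.le]
  exact le_of_mul_le_mul_left h6 hN'

theorem aux_tail : ∃ C : ℝ, 0 ≤ C ∧ ∀ N : ℕ, ∑ p ∈ N.primesBelow, Real.log p / (p * (p - 1)) ≤ C := by
  have hs : Summable (fun n : ℕ => 4 * (1 / (n:ℝ) ^ (3/2 : ℝ))) :=
    (Real.summable_one_div_nat_rpow.mpr (by norm_num)).mul_left 4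
  refine ⟨∑' n : ℕ, 4 * (1 / (n:ℝ) ^ (3/2 : ℝ)), tsum_nonneg (fun n => by positivity), fun N => ?_⟩
  refine le_trans (Finset.sum_le_sum (g := fun n : ℕ => 4 * (1 / (n:ℝ) ^ (3/2 : ℝ))) ?_)
    (hs.sum_le_tsum _ (fun n _ => by positivity))
  intro p hp
  have hp2 : (2:ℝ) ≤ p := by exact_mod_cast Nat.two_le_of_mem_primesBelow hp
  have h1 := Real.log_le_rpow_div (x := (p:ℝ)) (ε := 1/2) (by positivity) (by norm_num)
  have hp0 : (0:ℝ) < p := by linarith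
  rw [div_le_iff₀ (by nlinarith)]
  have h2 : (p:ℝ) ^ (3/2:ℝ) = p * (p:ℝ)^(1/2:ℝ) := by
    rw [show (3/2:ℝ) = 1 + 1/2 by norm_num, Real.rpow_add hp0, Real.rpow_one]
  have h3 : (p:ℝ)^(1/2:ℝ) * (p:ℝ)^(1/2:ℝ) = p := by
    rw [← Real.rpow_add hp0]; norm_num
  set r := (p:ℝ)^(1/2:ℝ) with hr
  have hr0 : 0 < r := by positivity
  rw [h2]
  have h4 : 4 * (1 / ((p:ℝ) * r)) * (p * (p-1)) = 4 * (p - 1) / r := by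
    field_simp
  rw [h4, le_div_iff₀ hr0]
  have : Real.log p ≤ 2 * r := by linarith
  nlinarith

theorem aux_mertens_lower : ∃ C : ℝ, 0 ≤ C ∧ ∀ N : ℕ, 1 ≤ N →
    Real.log N - C ≤ ∑ p ∈ (N+1).primesBelow, Real.log p / p := by
  obtain ⟨C, hC, hCN⟩ := aux_tail
  refine ⟨C + 1, by linarith, fun N hN => ?_⟩
  have hN' : (0:ℝ) < N := by exact_mod_cast hN
  have h1 : Real.log (N.factorial) ≤ ∑ p ∈ (N+1).primesBelow, N * (Real.log p / (p - 1)) := by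
    rw [Real.log_nat_eq_sum_factorization, Finsupp.sum]
    refine le_trans (Finset.sum_le_sum_of_subset_of_nonneg (t := (N+1).primesBelow) ?_ ?_) ?_
    · intro p hp
      rw [Nat.support_factorization, Nat.mem_primeFactors] at hp
      rw [Nat.mem_primesBelow]
      exact ⟨Nat.lt_succ_of_le ((hp.1.dvd_factorial).mp hp.2.1), hp.1⟩
    · intro p _ _
      have := Real.log_natCast_nonneg p
      positivity
    · apply Finset.sum_le_sum
      intro p hp
      have hpp := Nat.prime_of_mem_primesBelow hp
      have : Fact p.Prime := ⟨hpp⟩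
      have h2 : (2:ℝ) ≤ p := by exact_mod_cast hpp.two_le
      have h3 := sub_one_mul_padicValNat_factorial_lt_of_ne_zero p (n := N) (by omega)
      rw [← Nat.factorization_def _ hpp] at h3
      have h4 : ((p:ℝ) - 1) * (N.factorial.factorization p : ℝ) ≤ N := by
        have : (((p - 1) * N.factorial.factorization p : ℕ) : ℝ) ≤ N := by exact_mod_cast h3.le
        rwa [Nat.cast_mul, Nat.cast_sub hpp.one_le, Nat.cast_one] at this
      have h5 := Real.log_natCast_nonneg p
      rw [mul_div_assoc', le_div_iff₀ (by linarith)]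
      nlinarith
  have h2 := Stirling.le_log_factorial_stirling (n := N) (by omega)
  have h3 : 0 ≤ Real.log N := Real.log_natCast_nonneg N
  have h4 : 0 ≤ Real.log (2 * Real.pi) := Real.log_nonneg (by nlinarith [Real.pi_gt_three])
  have h5 : ∑ p ∈ (N+1).primesBelow, Real.log p / ((p:ℝ) - 1)
      = ∑ p ∈ (N+1).primesBelow, Real.log p / p + ∑ p ∈ (N+1).primesBelow, Real.log p / (p * (p - 1)) := by
    rw [← Finset.sum_add_distrib]
    apply Finset.sum_congr rfl
    intro p hp
    have h2 : (2:ℝ) ≤ p := by exact_mod_cast Nat.two_le_of_mem_primesBelow hp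
    have : (p:ℝ) - 1 ≠ 0 := by linarith
    field_simp
    ring
  rw [← Finset.mul_sum, h5] at h1
  have h6 := hCN (N+1)
  have h7 : (N:ℝ) * (Real.log N - 1) ≤ N * (∑ p ∈ (N+1).primesBelow, Real.log p / p + C) := by
    nlinarith
  have := le_of_mul_le_mul_left h7 hN'
  linarith

/-- First theorem of Mertens. -/
theorem aux_mertens : ∃ C : ℝ, 0 < C ∧ ∀ N : ℕ, 1 ≤ N →
    |∑ p ∈ N.primesBelow, Real.log p / p - Real.log N| ≤ C := by
  obtain ⟨C, hC, hCN⟩ := aux_mertens_lower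
  have h4 : 0 ≤ Real.log 4 := Real.log_nonneg (by norm_num)
  refine ⟨C + Real.log 4 + 5, by linarith, fun N hN => ?_⟩
  rw [abs_le]
  constructor
  · rcases Nat.lt_or_ge N 2 with h | h
    · obtain rfl : N = 1 := by omega
      simp; linarith
    · obtain ⟨M, rfl⟩ : ∃ M, N = M + 1 := ⟨N - 1, by omega⟩
      have h1 := hCN M (by omega)
      have h2 : Real.log ((M+1 : ℕ):ℝ) ≤ Real.log M + Real.log 2 := by
        have : (1:ℝ) ≤ M := by exact_mod_cast (by omega : 1 ≤ M)
        rw [← Real.log_mul (by positivity) (by norm_num)]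
        apply Real.log_le_log (by positivity)
        push_cast; linarith
      have h3 : Real.log 2 ≤ 1 := by linarith [Real.log_two_lt_d9]
      linarith
  · have h1 := aux_mertens_upper N hN
    have h2 : ∑ p ∈ N.primesBelow, Real.log p / p ≤ ∑ p ∈ (N+1).primesBelow, Real.log p / p := by
      apply Finset.sum_le_sum_of_subset_of_nonneg
      · intro p hp
        rw [Nat.mem_primesBelow] at *
        exact ⟨by omega, hp.2⟩
      · intro p _ _
        have := Real.log_natCast_nonneg p
        positivity
    linarith

theorem aux_sq : ∀ M : ℕ, ∑ p ∈ M.primesBelow, 1 / ((p:ℝ) * (p-1)) ≤ 3 - 3 / (M:ℝ) := by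
  intro M
  rcases Nat.eq_zero_or_pos M with rfl | hM
  · simp
  induction M, hM using Nat.le_induction with
  | base => simp
  | succ n hn ih =>
    have hn' : (1:ℝ) ≤ n := by exact_mod_cast hn
    have hstep : (3:ℝ) / n - 3 / ((n + 1 : ℕ) : ℝ) = 3 / (n * (n + 1)) := by
      push_cast
      field_simp
      ring
    rw [Nat.primesBelow_succ]
    split_ifs with hp
    · rw [Finset.sum_insert (Nat.notMem_primesBelow n)]
      have h2 : (2:ℝ) ≤ n := by exact_mod_cast hp.two_le
      have h5 : 1 / ((n:ℝ) * (n - 1)) ≤ 3 / (n * (n + 1)) := by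
        rw [div_le_div_iff₀ (by nlinarith) (by positivity)]
        nlinarith
      linarith
    · have h5 : (0:ℝ) ≤ 3 / (n * (n + 1)) := by positivity
      linarith

/-- Lower bound of Euler. -/
theorem aux_euler (N : ℕ) (hN : 2 ≤ N) :
    Real.log N ≤ Real.exp (∑ p ∈ N.primesBelow, 1 / (p:ℝ) + 3) := by
  let F : ℕ →* ℝ :=
    { toFun := fun n => (n:ℝ)⁻¹
      map_one' := by simp
      map_mul' := by intro a b; push_cast; rw [mul_inv] }
  have hF : ∀ n, F n = (n:ℝ)⁻¹ := fun n => rfl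
  have h := EulerProduct.summable_and_hasSum_smoothNumbers_prod_primesBelow_geometric (f := F)
    (fun {p} hp => by
      rw [hF, Real.norm_of_nonneg (by positivity)]
      exact inv_lt_one_of_one_lt₀ (by exact_mod_cast hp.one_lt)) N
  have h1 : Real.log N ≤ ∑ n ∈ Finset.Icc 1 (N-1), (n:ℝ)⁻¹ := by
    have := log_add_one_le_harmonic (N-1)
    rw [harmonic_eq_sum_Icc] at this
    push_cast at this
    rwa [Nat.cast_sub (by omega), Nat.cast_one, sub_add_cancel] at this
  have h2 : ∑ n ∈ Finset.Icc 1 (N-1), (n:ℝ)⁻¹ ≤ ∏ p ∈ N.primesBelow, (1 - F p)⁻¹ := by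
    have hmem : ∀ n ∈ Finset.Icc 1 (N-1), n ∈ N.smoothNumbers := by
      intro n hn
      rw [Finset.mem_Icc] at hn
      exact Nat.mem_smoothNumbers_of_lt (by omega) (by omega)
    have := sum_le_hasSum ((Finset.Icc 1 (N-1)).subtype (· ∈ N.smoothNumbers))
      (fun i _ => by rw [hF]; positivity) h.2
    refine le_trans (le_of_eq ?_) this
    rw [Finset.sum_subtype_of_mem (fun n => F n) hmem]
    rfl
  refine h1.trans (h2.trans ?_)
  have h3 : ∏ p ∈ N.primesBelow, (1 - F p)⁻¹
      ≤ ∏ p ∈ N.primesBelow, Real.exp (1/(p:ℝ) + 1 / ((p:ℝ) * (p-1))) := by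
    apply Finset.prod_le_prod
    · intro p hp
      have h2 : (2:ℝ) ≤ p := by exact_mod_cast Nat.two_le_of_mem_primesBelow hp
      rw [hF, inv_nonneg, sub_nonneg]
      exact inv_le_one_of_one_le₀ (by linarith)
    · intro p hp
      have h2 : (2:ℝ) ≤ p := by exact_mod_cast Nat.two_le_of_mem_primesBelow hp
      have : (p:ℝ) - 1 ≠ 0 := by linarith
      refine le_trans (le_of_eq ?_) (Real.add_one_le_exp _)
      rw [hF]
      field_simp
      ring
  refine h3.trans ?_
  rw [← Real.exp_sum, Real.exp_le_exp, Finset.sum_add_distrib]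
  have h4 := aux_sq
  have := h4 N
  have : 0 ≤ 3 / (N:ℝ) := by positivity
  linarith

/-- The Rankin trick for squarefree numbers composed of a given set of primes below `w`. -/
theorem aux_rankin : ∃ A : ℕ, ∀ w : ℕ, 2 ≤ w → ∀ S : Finset ℕ, S ⊆ w.primesBelow →
    (1/2 : ℝ) * ∏ p ∈ S, (1 + 2 / (p:ℝ)) ≤
      ∑ T ∈ S.powerset with ∏ p ∈ T, p ≤ w ^ A, (2:ℝ) ^ T.card / ((∏ p ∈ T, p : ℕ) : ℝ) := by
  obtain ⟨C, hC, hCN⟩ := aux_mertens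
  obtain ⟨A, hA⟩ := exists_nat_ge (4 + 4 * C / Real.log 2 + 1)
  refine ⟨A, fun w hw S hS => ?_⟩
  have hlw : Real.log 2 ≤ Real.log w := Real.log_le_log (by norm_num) (by exact_mod_cast hw)
  have hl2 : 0 < Real.log 2 := Real.log_pos (by norm_num)
  have hlw0 : 0 < Real.log w := by linarith
  set σ : ℕ → ℝ := fun p => Real.exp (Real.log p / Real.log w) with hσ
  have hpS : ∀ p ∈ S, 2 ≤ p ∧ p < w := fun p hp =>
    ⟨Nat.two_le_of_mem_primesBelow (hS hp), Nat.lt_of_mem_primesBelow (hS hp)⟩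
  have e1 : ∀ T : Finset ℕ, (2:ℝ) ^ T.card / ((∏ p ∈ T, p : ℕ) : ℝ) = ∏ p ∈ T, (2 / (p:ℝ)) := by
    intro T
    rw [Finset.prod_div_distrib, Finset.prod_const, Nat.cast_prod]
  have e2 : ∏ p ∈ S, (1 + 2 / (p:ℝ)) = ∑ T ∈ S.powerset, (2:ℝ) ^ T.card / ((∏ p ∈ T, p : ℕ) : ℝ) := by
    rw [Finset.prod_one_add]
    exact Finset.sum_congr rfl (fun T _ => (e1 T).symm)
  have e3 : ∏ p ∈ S, (1 + 2 / (p:ℝ) * σ p)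
      = ∑ T ∈ S.powerset, (2:ℝ) ^ T.card / ((∏ p ∈ T, p : ℕ) : ℝ) * ∏ p ∈ T, σ p := by
    rw [Finset.prod_one_add]
    refine Finset.sum_congr rfl (fun T _ => ?_)
    rw [e1, Finset.prod_mul_distrib]
  -- upper bound for the twisted product
  have h1 : ∏ p ∈ S, (1 + 2 / (p:ℝ) * σ p)
      ≤ (∏ p ∈ S, (1 + 2 / (p:ℝ))) * Real.exp (4 + 4 * C / Real.log 2) := by
    have : ∏ p ∈ S, (1 + 2 / (p:ℝ) * σ p)
      ≤ ∏ p ∈ S, ((1 + 2 / (p:ℝ)) * Real.exp (4 / Real.log w * (Real.log p / p))) := by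
      apply Finset.prod_le_prod
      · intro p hp
        positivity
      · intro p hp
        obtain ⟨h2, h3⟩ := hpS p hp
        have h2' : (2:ℝ) ≤ p := by exact_mod_cast h2
        have hu0 : 0 ≤ Real.log p / Real.log w :=
          div_nonneg (Real.log_natCast_nonneg p) hlw0.le
        have hu1 : Real.log p / Real.log w ≤ 1 := by
          rw [div_le_one hlw0]
          exact Real.log_le_log (by positivity) (by exact_mod_cast h3.le)
        set u := Real.log p / Real.log w with hu
        have hexp : Real.exp u ≤ 1 + 2 * u := by
          have := abs_le.mp (Real.abs_exp_sub_one_sub_id_le (x := u) (by rw [abs_of_nonneg hu0]; exact hu1))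
          nlinarith [this.2]
        have e4 : 4 / Real.log w * (Real.log p / p) = 4 * u / p := by
          rw [hu]; field_simp
        rw [e4]
        have h5 := Real.add_one_le_exp (4 * u / p)
        have h6 : 0 ≤ 4 * u / p := by positivity
        have h7 : 0 < 2 / (p:ℝ) := by positivity
        calc 1 + 2 / (p:ℝ) * σ p ≤ 1 + 2 / (p:ℝ) * (1 + 2 * u) := by
              gcongr
          _ = (1 + 2 / (p:ℝ)) + 4 * u / p := by ring
          _ ≤ (1 + 2 / (p:ℝ)) * (4 * u / p + 1) := by nlinarith
          _ ≤ _ := by gcongr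
    refine this.trans ?_
    rw [Finset.prod_mul_distrib, ← Real.exp_sum, ← Finset.mul_sum]
    have h2 : ∑ p ∈ S, Real.log p / (p:ℝ) ≤ Real.log w + C := by
      have h3 := (abs_le.mp (hCN w (by omega))).2
      have : ∑ p ∈ S, Real.log p / (p:ℝ) ≤ ∑ p ∈ w.primesBelow, Real.log p / (p:ℝ) := by
        apply Finset.sum_le_sum_of_subset_of_nonneg hS
        intro p _ _
        have := Real.log_natCast_nonneg p
        positivity
      linarith
    have h3 : 4 / Real.log w * ∑ p ∈ S, Real.log p / (p:ℝ) ≤ 4 + 4 * C / Real.log 2 := by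
      calc 4 / Real.log w * ∑ p ∈ S, Real.log p / (p:ℝ)
          ≤ 4 / Real.log w * (Real.log w + C) := by gcongr
        _ = 4 + 4 * C / Real.log w := by field_simp
        _ ≤ _ := by gcongr
    gcongr
  -- the terms with large product
  have h2 : ∑ T ∈ S.powerset with ¬ ∏ p ∈ T, p ≤ w ^ A, (2:ℝ) ^ T.card / ((∏ p ∈ T, p : ℕ) : ℝ)
      ≤ Real.exp (-A) * ∏ p ∈ S, (1 + 2 / (p:ℝ) * σ p) := by
    rw [e3, Finset.mul_sum]
    refine le_trans (Finset.sum_le_sum (g := fun T : Finset ℕ => Real.exp (-A) * ((2:ℝ) ^ T.card / ((∏ p ∈ T, p : ℕ) : ℝ) * ∏ p ∈ T, σ p)) ?_) 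
      (Finset.sum_le_sum_of_subset_of_nonneg (Finset.filter_subset _ _) (fun T _ _ => by positivity))
    intro T hT
    rw [Finset.mem_filter, Finset.mem_powerset] at hT
    have h3 : ∏ p ∈ T, σ p = Real.exp (Real.log ((∏ p ∈ T, p : ℕ) : ℝ) / Real.log w) := by
      rw [Nat.cast_prod, Real.log_prod, Finset.sum_div, Real.exp_sum]
      intro p hp
      have := (hpS p (hT.1 hp)).1
      positivity
    have h4 : (A:ℝ) ≤ Real.log ((∏ p ∈ T, p : ℕ) : ℝ) / Real.log w := by
      rw [le_div_iff₀ hlw0, ← Real.log_pow]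
      apply Real.log_le_log (by positivity)
      have := hT.2
      push Not at this
      exact_mod_cast this.le
    have h5 : 1 ≤ Real.exp (-A) * ∏ p ∈ T, σ p := by
      rw [h3, ← Real.exp_add]
      apply Real.one_le_exp
      linarith
    calc (2:ℝ) ^ T.card / ((∏ p ∈ T, p : ℕ) : ℝ) 
        ≤ (2:ℝ) ^ T.card / ((∏ p ∈ T, p : ℕ) : ℝ) * (Real.exp (-A) * ∏ p ∈ T, σ p) := 
          le_mul_of_one_le_right (by positivity) h5
      _ = _ := by ring
  have h3 := Finset.sum_filter_add_sum_filter_not S.powerset (fun T => ∏ p ∈ T, p ≤ w ^ A)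
    (fun T => (2:ℝ) ^ T.card / ((∏ p ∈ T, p : ℕ) : ℝ))
  rw [← e2] at h3
  have hP : 0 ≤ ∏ p ∈ S, (1 + 2 / (p:ℝ)) := Finset.prod_nonneg (fun p _ => by positivity)
  have h4 : Real.exp (-A) * Real.exp (4 + 4 * C / Real.log 2) ≤ 1/2 := by
    rw [← Real.exp_add]
    have : Real.exp (-A + (4 + 4 * C / Real.log 2)) ≤ Real.exp (-1) := by
      rw [Real.exp_le_exp]; linarith
    linarith [Real.exp_neg_one_lt_half]
  have h5 : Real.exp (-A) * ∏ p ∈ S, (1 + 2 / (p:ℝ) * σ p) ≤ 1/2 * ∏ p ∈ S, (1 + 2 / (p:ℝ)) := by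
    calc Real.exp (-A) * ∏ p ∈ S, (1 + 2 / (p:ℝ) * σ p) 
        ≤ Real.exp (-A) * ((∏ p ∈ S, (1 + 2 / (p:ℝ))) * Real.exp (4 + 4 * C / Real.log 2)) := by gcongr
      _ = (Real.exp (-A) * Real.exp (4 + 4 * C / Real.log 2)) * ∏ p ∈ S, (1 + 2 / (p:ℝ)) := by ring
      _ ≤ _ := by gcongr
  linarith

theorem aux_H (f : ℕ → ℤ) (hf1 : f 1 = 1) (hfmul : ∀ a b : ℕ, f (a * b) = f a * f b)
    (n : ℕ) (hn : n ≠ 0) :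
    ∑ d ∈ n.divisors, ArithmeticFunction.moebius d * f d = ∏ p ∈ n.primeFactors, (1 - f p) := by
  induction n using Nat.recOnPosPrimePosCoprime with
  | zero => exact absurd rfl hn
  | one => simp [hf1]
  | prime_pow p k hp hk =>
    rw [Nat.sum_divisors_prime_pow hp, Nat.primeFactors_prime_pow hk.ne' hp, Finset.prod_singleton]
    obtain ⟨m, rfl⟩ : ∃ m, k = m + 1 := ⟨k - 1, by omega⟩
    rw [Finset.sum_range_succ', Finset.sum_range_succ']
    have : ∑ i ∈ Finset.range m, ArithmeticFunction.moebius (p ^ (i + 1 + 1)) * f (p ^ (i + 1 + 1)) = 0 := by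
      apply Finset.sum_eq_zero
      intro i _
      rw [ArithmeticFunction.moebius_apply_prime_pow hp (by omega), if_neg (by omega), zero_mul]
    rw [this]
    simp [hf1, ArithmeticFunction.moebius_apply_prime hp]
    ring
  | coprime a b ha hb hab iha ihb =>
    rw [hab.primeFactors_mul, Finset.prod_union hab.disjoint_primeFactors, ← iha (by omega),
      ← ihb (by omega)]
    let g : ArithmeticFunction ℤ := ⟨fun n => ArithmeticFunction.moebius n * f n, by simp⟩
    have hg : ∀ n, g n = ArithmeticFunction.moebius n * f n := fun n => rfl
    have hgm : g.IsMultiplicative := by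
      refine ⟨by rw [hg]; simp [hf1], fun {m n} hmn => ?_⟩
      rw [hg, hg, hg, ArithmeticFunction.isMultiplicative_moebius.map_mul_of_coprime hmn, hfmul]
      ring
    have hgz : (g * (ArithmeticFunction.zeta : ArithmeticFunction ℤ)).IsMultiplicative :=
      hgm.mul ArithmeticFunction.isMultiplicative_zeta.natCast
    have h2 : ∀ n, (g * (ArithmeticFunction.zeta : ArithmeticFunction ℤ)) n
        = ∑ d ∈ n.divisors, ArithmeticFunction.moebius d * f d := by
      intro n
      rw [ArithmeticFunction.coe_mul_zeta_apply]
      rfl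
    rw [← h2, ← h2, ← h2, hgz.map_mul_of_coprime hab]

theorem aux_S (f : ℕ → ℤ) (hfpm : ∀ n : ℕ, 1 ≤ n → f n = 1 ∨ f n = -1) (N : ℕ) (hN : 1 ≤ N) :
    (∑ n ∈ Finset.Icc 1 N, ((∑ d ∈ n.divisors, ArithmeticFunction.moebius d * f d : ℤ) : ℝ)) / N - 1
      ≤ ∑ n ∈ Finset.Icc 1 N, ((ArithmeticFunction.moebius n * f n : ℤ) : ℝ) / n := by
  have hN' : (0:ℝ) < N := by exact_mod_cast hN
  let g : ArithmeticFunction ℝ := ⟨fun n => ((ArithmeticFunction.moebius n * f n : ℤ) : ℝ), by simp⟩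
  have hg : ∀ n, g n = ((ArithmeticFunction.moebius n * f n : ℤ) : ℝ) := fun n => rfl
  have hI : Finset.Icc 1 N = Finset.Ioc 0 N := rfl
  have h1 := ArithmeticFunction.sum_Ioc_mul_zeta_eq_sum g N
  have h2 : ∀ n, (g * (ArithmeticFunction.zeta : ArithmeticFunction ℝ)) n
      = ((∑ d ∈ n.divisors, ArithmeticFunction.moebius d * f d : ℤ) : ℝ) := by
    intro n
    rw [ArithmeticFunction.coe_mul_zeta_apply]
    push_cast
    apply Finset.sum_congr rfl
    intro d _
    rw [hg]; push_cast; rfl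
  have h3 : ∑ n ∈ Finset.Icc 1 N, ((∑ d ∈ n.divisors, ArithmeticFunction.moebius d * f d : ℤ) : ℝ)
      = ∑ n ∈ Finset.Icc 1 N, g n * ((N / n : ℕ) : ℝ) := by
    rw [hI, ← h1]
    exact Finset.sum_congr rfl (fun n _ => (h2 n).symm)
  rw [h3, sub_le_iff_le_add, div_le_iff₀ hN', add_mul, one_mul, Finset.sum_mul]
  have h4 : (N:ℝ) = ∑ n ∈ Finset.Icc 1 N, (1:ℝ) := by simp
  nth_rw 2 [h4]
  rw [← Finset.sum_add_distrib]
  apply Finset.sum_le_sum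
  intro n hn
  rw [Finset.mem_Icc] at hn
  have hn0 : (0:ℝ) < n := by exact_mod_cast hn.1
  have hfl : ((N / n : ℕ) : ℝ) ≤ (N:ℝ) / n := Nat.cast_div_le
  have hfl2 : (N:ℝ) / n ≤ ((N / n : ℕ) : ℝ) + 1 := by
    rw [← Nat.floor_div_eq_div (K := ℝ)]
    exact (Nat.lt_floor_add_one _).le
  have hb : |g n| ≤ 1 := by
    rw [hg]
    have h5 : |ArithmeticFunction.moebius n * f n| ≤ 1 := by
      have h6 : |f n| = 1 := by rcases hfpm n hn.1 with h | h <;> simp [h]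
      rw [abs_mul, h6, mul_one]
      exact ArithmeticFunction.abs_moebius_le_one
    exact_mod_cast h5
  have hb' := abs_le.mp hb
  rw [← hg, div_mul_eq_mul_div, mul_div_assoc]
  nlinarith

theorem aux_diff (F : ℕ → ℝ) (a b : ℕ) (hab : a ≤ b) :
    ∑ p ∈ Finset.Ico a b with p.Prime, F p = ∑ p ∈ b.primesBelow, F p - ∑ p ∈ a.primesBelow, F p := by
  rw [Nat.primesBelow, Nat.primesBelow, Finset.sum_filter, Finset.sum_filter, Finset.sum_filter,
    Finset.sum_Ico_eq_sub _ hab]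

/-- sum of `1/p` over primes `p ∈ [b^i, b^j)` with `f p = -1` -/
noncomputable def blk (f : ℕ → ℤ) (b i j : ℕ) : ℝ :=
  ∑ p ∈ Finset.Ico (b^i) (b^j) with p.Prime ∧ f p = -1, 1 / (p:ℝ)

theorem blk_sum (f : ℕ → ℤ) (b : ℕ) (hb : 1 ≤ b) (i n : ℕ) :
    ∑ k ∈ Finset.range n, blk f b (i + k) (i + k + 1) = blk f b i (i + n) := by
  induction n with
  | zero => simp [blk]
  | succ n ih =>
    rw [Finset.sum_range_succ, ih]
    unfold blk
    simp only [Finset.sum_filter]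
    rw [← add_assoc]
    exact Finset.sum_Ico_consecutive _ (Nat.pow_le_pow_right hb (by omega))
      (Nat.pow_le_pow_right hb (by omega))

theorem aux_block (f : ℕ → ℤ) (hfpm : ∀ n : ℕ, 1 ≤ n → f n = 1 ∨ f n = -1)
    (c : ℝ) (hc : c ∈ Set.Ico (-1 : ℝ) 0) 
    (hM : ∃ C : ℝ, 0 < C ∧ ∀ N : ℕ, 1 ≤ N →
      |∑ p ∈ N.primesBelow, Real.log p / p - Real.log N| ≤ C)
    (hconv : ∃ L : ℝ, Filter.Tendsto
      (fun N : ℕ => ∑ p ∈ N.primesBelow, (c - (f p : ℝ)) / p) Filter.atTop (nhds L)) :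
    ∃ b D : ℕ, 2 ≤ b ∧ 1 ≤ D ∧ ∃ c1 : ℝ, 0 < c1 ∧ ∃ t0 : ℕ, 1 ≤ t0 ∧ ∀ t : ℕ, t0 ≤ t →
      c1 / t ≤ ∑ k ∈ Finset.range t, blk f b (D*t + k) (D*t+k+1) *
        blk f b (D*t + (t - 1 - k)) (D*t + (t-1-k) + 1) := by
  obtain ⟨C, hC, hCN⟩ := hM
  obtain ⟨hc1, hc0⟩ := hc
  obtain ⟨κ, hκ⟩ : ∃ κ : ℝ, κ = -c := ⟨_, rfl⟩
  have hκ0 : 0 < κ := by linarith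
  obtain ⟨D, hD⟩ := exists_nat_ge (2 / κ + 1)
  have hD1 : (1:ℝ) < D := by
    have : 0 < 2 / κ := by positivity
    linarith
  have hDκ : 2 + κ ≤ κ * D := by
    have := mul_le_mul_of_nonneg_left hD hκ0.le
    have h2 : κ * (2 / κ + 1) = 2 + κ := by field_simp
    linarith
  obtain ⟨b, hb⟩ := exists_nat_ge (Real.exp (8 * C / κ) + 2)
  have hb2 : 2 ≤ b := by
    have : (2:ℝ) ≤ b := by linarith [Real.exp_pos (8 * C / κ)]
    exact_mod_cast this
  have hb0 : (0:ℝ) < b := by exact_mod_cast (by omega : 0 < b)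
  obtain ⟨B, hB⟩ : ∃ B : ℝ, B = Real.log b := ⟨_, rfl⟩
  have hBC : 8 * C / κ ≤ B := by
    rw [hB, Real.le_log_iff_exp_le hb0]; linarith
  have hB0 : 0 < B := lt_of_lt_of_le (by positivity) hBC
  have hBC' : 2 * C / B ≤ κ / 4 := by
    rw [div_le_iff₀ hB0]
    rw [div_le_iff₀ hκ0] at hBC
    linarith
  -- Mertens on blocks
  have hlogpow : ∀ i : ℕ, Real.log ((b ^ i : ℕ) : ℝ) = i * B := by
    intro i; rw [Nat.cast_pow, Real.log_pow, hB]
  have hbpos : ∀ i : ℕ, 1 ≤ b ^ i := fun i => Nat.one_le_pow _ _ (by omega)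
  have hpowle : ∀ i j : ℕ, i ≤ j → b ^ i ≤ b ^ j := fun i j h => Nat.pow_le_pow_right (by omega) h
  have hMu : ∀ i j : ℕ, i ≤ j → 
      |∑ p ∈ Finset.Ico (b^i) (b^j) with p.Prime, Real.log p / (p:ℝ) - (j - i) * B| ≤ 2 * C := by
    intro i j hij
    rw [aux_diff (fun p => Real.log p / (p:ℝ)) _ _ (hpowle i j hij)]
    have h1 := abs_le.mp (hCN _ (hbpos i))
    have h2 := abs_le.mp (hCN _ (hbpos j))
    rw [hlogpow] at h1 h2
    rw [abs_le]
    constructor <;> linarith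
  -- Cauchy
  obtain ⟨ε, hε⟩ : ∃ ε : ℝ, ε = κ / (16 * D) := ⟨_, rfl⟩
  have hε0 : 0 < ε := by rw [hε]; positivity
  obtain ⟨L, hL⟩ := hconv
  obtain ⟨M0, hM0⟩ := Metric.cauchySeq_iff.mp hL.cauchySeq ε hε0
  obtain ⟨t1, ht1⟩ := exists_nat_ge ((1 + κ) * (2 * C / B) / ε)
  refine ⟨b, D, hb2, by exact_mod_cast hD1.le, κ / (8 * D ^ 2), by positivity, M0 + t1 + 1, by omega, ?_⟩
  intro t ht
  have ht0 : (0:ℝ) < t := by exact_mod_cast (by omega : 0 < t)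
  have hD0 : (0:ℝ) < D := by linarith
  obtain ⟨U, hU⟩ : ∃ U : ℝ, U = (1 + 2 * C / B) / (D * t) := ⟨_, rfl⟩
  have hU0 : 0 < U := by rw [hU]; positivity
  -- upper bound for each block
  have hsU : ∀ k : ℕ, blk f b (D*t + k) (D*t+k+1) ≤ U := by
    intro k
    have h1 := (abs_le.mp (hMu (D*t+k) (D*t+k+1) (by omega))).2
    have h2 : blk f b (D*t + k) (D*t+k+1) * (D * t * B) 
        ≤ ∑ p ∈ Finset.Ico (b^(D*t+k)) (b^(D*t+k+1)) with p.Prime, Real.log p / (p:ℝ) := by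
      unfold blk
      rw [Finset.sum_mul]
      refine le_trans (Finset.sum_le_sum (g := fun p : ℕ => Real.log p / (p:ℝ)) ?_)
        (Finset.sum_le_sum_of_subset_of_nonneg ?_ ?_)
      · intro p hp
        rw [Finset.mem_filter, Finset.mem_Ico] at hp
        have h3 : D * t * B ≤ Real.log p := by
          have h4 : b ^ (D * t) ≤ p := (hpowle _ _ (by omega)).trans hp.1.1
          have h5 := Real.log_le_log (by exact_mod_cast hbpos (D*t)) (Nat.cast_le (α := ℝ).mpr h4)
          rw [hlogpow] at h5
          push_cast at h5
          exact h5
        rw [one_div, inv_mul_eq_div]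
        gcongr
      · intro p hp
        rw [Finset.mem_filter] at *
        exact ⟨hp.1, hp.2.1⟩
      · intro p _ _
        have := Real.log_natCast_nonneg p
        positivity
    have h3 : blk f b (D*t + k) (D*t+k+1) * (D * t * B) ≤ B + 2 * C := by
      push_cast at h1
      linarith
    rw [hU, le_div_iff₀ (by positivity)]
    have h4 : (1 + 2 * C / B) * B = B + 2 * C := by field_simp
    rw [← h4, ← mul_assoc] at h3
    exact le_of_mul_le_mul_right h3 hB0
  -- lower bound for the total
  have hlow : (1 + κ) / (D + 1) - 2 * ε ≤ 2 * blk f b (D*t) (D*t+t) := by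
    obtain ⟨τ, hτ⟩ : ∃ τ : ℝ, τ = ∑ p ∈ Finset.Ico (b^(D*t)) (b^(D*t+t)) with p.Prime, 1 / (p:ℝ) := ⟨_, rfl⟩
    have h1 := (abs_le.mp (hMu (D*t) (D*t+t) (by omega))).1
    have h2 : ∑ p ∈ Finset.Ico (b^(D*t)) (b^(D*t+t)) with p.Prime, Real.log p / (p:ℝ)
        ≤ τ * ((D + 1) * t * B) := by
      rw [hτ, Finset.sum_mul]
      apply Finset.sum_le_sum
      intro p hp
      rw [Finset.mem_filter, Finset.mem_Ico] at hp
      have hp0 : 0 < p := hp.2.pos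
      have h3 : Real.log p ≤ (D + 1) * t * B := by
        have h5 := Real.log_le_log (by exact_mod_cast hp0) (Nat.cast_le (α := ℝ).mpr hp.1.2.le)
        rw [hlogpow] at h5
        push_cast at h5
        linarith
      rw [one_div, inv_mul_eq_div]
      gcongr
    have h3 : t * B - 2 * C ≤ τ * ((D + 1) * t * B) := by
      push_cast at h1
      linarith
    have h4 : 1 / ((D:ℝ) + 1) - 2 * C / B / t ≤ τ := by
      have h5 : (t * B - 2 * C) / ((D + 1) * t * B) ≤ τ := by
        rw [div_le_iff₀ (by positivity)]; exact h3
      have h6 : (t * B - 2 * C) / ((D + 1) * t * B) = 1 / ((D:ℝ) + 1) - (2 * C / B / t) / (D + 1) := by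
        field_simp
      have h7 : (2 * C / B / t) / (D + 1) ≤ 2 * C / B / t := 
        div_le_self (by positivity) (by linarith)
      linarith
    have h5 : (1 + κ) * (2 * C / B / t) ≤ ε := by
      have : (t1:ℝ) ≤ t := by exact_mod_cast (by omega : t1 ≤ t)
      have h6 := ht1.trans this
      rw [div_le_iff₀ hε0] at h6
      rw [← mul_div_assoc, div_le_iff₀ ht0]
      linarith
    have h6 : -ε ≤ 2 * blk f b (D*t) (D*t+t) - (1 + κ) * τ := by
      have hlarge : ∀ j, t ≤ j → M0 ≤ b ^ j := by
        intro j hj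
        have := Nat.lt_pow_self (n := j) (show 1 < b by omega)
        omega
      have hd := hM0 (b^(D*t+t)) (hlarge _ (by omega)) (b^(D*t)) (hlarge _ (by
        have : 1 ≤ D := by exact_mod_cast hD1.le
        nlinarith))
      rw [Real.dist_eq, ← aux_diff (fun p => (c - (f p : ℝ)) / p) _ _ (hpowle _ _ (by omega))] at hd
      have h7 := (abs_lt.mp hd).1
      have h8 : ∑ p ∈ Finset.Ico (b^(D*t)) (b^(D*t+t)) with p.Prime, (c - (f p : ℝ)) / p
          = 2 * blk f b (D*t) (D*t+t) - (1 + κ) * τ := by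
        rw [hτ, blk, ← Finset.filter_filter, Finset.sum_filter (fun p => f p = -1),
          Finset.mul_sum, Finset.mul_sum, ← Finset.sum_sub_distrib]
        apply Finset.sum_congr rfl
        intro p hp
        rw [Finset.mem_filter] at hp
        rcases hfpm p hp.2.one_le with h | h
        · rw [h, hκ]; simp; ring
        · rw [h, hκ]; simp; ring
      linarith
    have h9 : (1 + κ) * (1 / ((D:ℝ) + 1) - 2 * C / B / t) ≤ (1 + κ) * τ := by gcongr
    have h10 : (1 + κ) * (1 / ((D:ℝ) + 1) - 2 * C / B / t) = (1 + κ) / (D + 1) - (1 + κ) * (2 * C / B / t) := by ring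
    linarith
  have hsum := blk_sum f b (by omega) (D*t) t
  have hrefl : ∑ k ∈ Finset.range t, blk f b (D*t + (t-1-k)) (D*t + (t-1-k) + 1) = blk f b (D*t) (D*t+t) := by
    rw [← hsum, Finset.sum_range_reflect (fun k => blk f b (D*t+k) (D*t+k+1))]
  have hkey : U * (2 * blk f b (D*t) (D*t+t) - t * U) ≤ ∑ k ∈ Finset.range t, blk f b (D*t + k) (D*t+k+1) *
        blk f b (D*t + (t - 1 - k)) (D*t + (t-1-k) + 1) := by
    have h1 : U * (2 * blk f b (D*t) (D*t+t) - t * U) = ∑ k ∈ Finset.range t, 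
        U * (blk f b (D*t + k) (D*t+k+1) + blk f b (D*t + (t - 1 - k)) (D*t + (t-1-k) + 1) - U) := by
      rw [← Finset.mul_sum, Finset.sum_sub_distrib, Finset.sum_add_distrib, hsum, hrefl]
      simp; left; ring
    rw [h1]
    apply Finset.sum_le_sum
    intro k _
    nlinarith [mul_nonneg (sub_nonneg.mpr (hsU k)) (sub_nonneg.mpr (hsU (t-1-k)))]
  refine le_trans ?_ hkey
  have htU : t * U = (1 + 2 * C / B) / D := by rw [hU]; field_simp
  have hmain : κ / (8 * D) ≤ 2 * blk f b (D*t) (D*t+t) - t * U := by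
    have h1 : (1 + κ / 2) / D ≤ (1 + κ) / (D + 1) := by
      rw [div_le_div_iff₀ hD0 (by linarith)]
      nlinarith
    have h2 : (1 + 2 * C / B) / D ≤ (1 + κ / 4) / D := by gcongr
    have h3 : (1 + κ / 2) / D - (1 + κ / 4) / D - 2 * ε = κ / (8 * D) := by
      rw [hε]; field_simp; ring
    linarith
  have hU1 : 1 / (D * t) ≤ U := by
    rw [hU]; gcongr
    have : 0 < 2 * C / B := by positivity
    linarith
  calc κ / (8 * D^2) / t = 1 / (D * t) * (κ / (8 * D)) := by field_simp
    _ ≤ U * (2 * blk f b (D*t) (D*t+t) - t * U) := by gcongr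

/-- pairs of large primes with `f = -1` and product at most `y` -/
def prs (f : ℕ → ℤ) (y : ℕ) : Finset (ℕ × ℕ) :=
  (Finset.range (y+1) ×ˢ Finset.range (y+1)).filter (fun x =>
    x.1.Prime ∧ x.2.Prime ∧ f x.1 = -1 ∧ f x.2 = -1 ∧ y ≤ x.1 ^ 4 ∧ y ≤ x.2 ^ 4 ∧ x.1 * x.2 ≤ y)

theorem aux_pairs (f : ℕ → ℤ)
    (hblk : ∃ b D : ℕ, 2 ≤ b ∧ 1 ≤ D ∧ ∃ c1 : ℝ, 0 < c1 ∧ ∃ t0 : ℕ, 1 ≤ t0 ∧ ∀ t : ℕ, t0 ≤ t →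
      c1 / t ≤ ∑ k ∈ Finset.range t, blk f b (D*t + k) (D*t+k+1) *
        blk f b (D*t + (t - 1 - k)) (D*t + (t-1-k) + 1)) :
    ∃ c0 : ℝ, 0 < c0 ∧ ∃ Y : ℕ, ∀ y : ℕ, Y ≤ y → c0 * (y / Real.log y) ≤ (prs f y).card := by
  obtain ⟨b, D, hb, hD, c1, hc1, t0, ht0, H⟩ := hblk
  have hb0 : (0:ℝ) < b := by exact_mod_cast (by omega : 0 < b)
  have hlb : 0 < Real.log b := Real.log_pos (by exact_mod_cast (by omega : 1 < b))
  refine ⟨c1 * Real.log b * ((b:ℝ) ^ (4 * D + 3))⁻¹, by positivity, b ^ ((2*D+1) * (t0 + 7)), ?_⟩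
  intro y hy
  have hy0 : 0 < y := lt_of_lt_of_le (by positivity) hy
  have hbD : 1 < b ^ (2*D+1) := Nat.one_lt_pow (by omega) (by omega)
  obtain ⟨t, htdef⟩ : ∃ t, t + 1 = Nat.log (b ^ (2*D+1)) y := by
    have : t0 + 7 ≤ Nat.log (b ^ (2*D+1)) y := by
      apply Nat.le_log_of_pow_le hbD
      rwa [← pow_mul]
    exact ⟨Nat.log (b ^ (2*D+1)) y - 1, by omega⟩
  have htt : t0 + 6 ≤ t := by
    have : t0 + 7 ≤ Nat.log (b ^ (2*D+1)) y := by
      apply Nat.le_log_of_pow_le hbD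
      rwa [← pow_mul]
    omega
  have hy1 : b ^ ((2*D+1)*(t+1)) ≤ y := by
    rw [pow_mul, htdef]; exact Nat.pow_log_le_self _ hy0.ne'
  have hy2 : y < b ^ ((2*D+1)*(t+2)) := by
    rw [pow_mul, show t + 2 = Nat.log (b ^ (2*D+1)) y + 1 by omega]
    exact Nat.lt_pow_succ_log_self hbD y
  have hpowle : ∀ i j : ℕ, i ≤ j → b ^ i ≤ b ^ j := fun i j h => Nat.pow_le_pow_right (by omega) h
  have ht0' : (0:ℝ) < t := by exact_mod_cast (by omega : 0 < t)
  -- sets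
  set P : ℕ → Finset ℕ := fun k => (Finset.Ico (b^(D*t+k)) (b^(D*t+k+1))).filter (fun p => p.Prime ∧ f p = -1) with hP
  have hPmem : ∀ k p, p ∈ P k ↔ (b^(D*t+k) ≤ p ∧ p < b^(D*t+k+1)) ∧ p.Prime ∧ f p = -1 := by
    intro k p; simp [hP]
  have hPlog : ∀ k p, p ∈ P k → Nat.log b p = D*t+k := by
    intro k p hp
    have := (hPmem k p).mp hp
    exact (Nat.log_eq_iff (Or.inr ⟨by omega, by have := this.2.1.pos; omega⟩)).mpr this.1
  have h1 := H t (by omega)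
  -- products
  have h2 : ∑ k ∈ Finset.range t, blk f b (D*t + k) (D*t+k+1) *
        blk f b (D*t + (t - 1 - k)) (D*t + (t-1-k) + 1)
      = ∑ k ∈ Finset.range t, ∑ x ∈ P k ×ˢ P (t-1-k), 1 / ((x.1:ℝ) * x.2) := by
    apply Finset.sum_congr rfl
    intro k _
    unfold blk
    rw [Finset.sum_mul_sum, Finset.sum_product]
    apply Finset.sum_congr rfl; intro p _
    apply Finset.sum_congr rfl; intro q _
    rw [one_div_mul_one_div]
  have hdisj : (↑(Finset.range t) : Set ℕ).PairwiseDisjoint (fun k => P k ×ˢ P (t-1-k)) := by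
    intro k _ k' _ hkk
    rw [Function.onFun, Finset.disjoint_left]
    intro x hx hx'
    have a1 := hPlog _ _ (Finset.mem_product.mp hx).1
    have a2 := hPlog _ _ (Finset.mem_product.mp hx').1
    omega
  rw [h2, ← Finset.sum_biUnion hdisj] at h1
  have hsub : (Finset.range t).biUnion (fun k => P k ×ˢ P (t-1-k)) ⊆ prs f y := by
    intro x hx
    rw [Finset.mem_biUnion] at hx
    obtain ⟨k, hk, hx⟩ := hx
    rw [Finset.mem_range] at hk
    rw [Finset.mem_product, hPmem, hPmem] at hx
    obtain ⟨⟨⟨p1, p2⟩, p3, p4⟩, ⟨⟨q1, q2⟩, q3, q4⟩⟩ := hx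
    have hpq : x.1 * x.2 ≤ y := by
      refine le_trans (Nat.mul_le_mul p2.le q2.le) (le_trans ?_ hy1)
      rw [← pow_add]
      apply hpowle
      have : D*t+k+1 + (D*t+(t-1-k)+1) = 2*D*t + t + 1 := by
        have : 2*D*t = D*t + D*t := by ring
        omega
      rw [this]; nlinarith
    have h4 : y ≤ (b ^ (D*t))^4 := by
      refine hy2.le.trans ?_
      rw [← pow_mul]
      apply hpowle
      have : 6 ≤ t := by omega
      nlinarith [Nat.mul_le_mul hD this, Nat.mul_le_mul (le_refl D) this]
    have hx1 := p3.pos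
    have hx2 := q3.pos
    simp only [prs, Finset.mem_filter, Finset.mem_product, Finset.mem_range]
    refine ⟨⟨?_, ?_⟩, p3, q3, p4, q4, ?_, ?_, hpq⟩
    · nlinarith
    · nlinarith
    · exact h4.trans (Nat.pow_le_pow_left ((hpowle _ _ (by omega)).trans p1) 4)
    · exact h4.trans (Nat.pow_le_pow_left ((hpowle _ _ (by omega)).trans q1) 4)
  have h3 : ∑ x ∈ (Finset.range t).biUnion (fun k => P k ×ˢ P (t-1-k)), 1 / ((x.1:ℝ) * x.2)
      ≤ ∑ x ∈ (Finset.range t).biUnion (fun k => P k ×ˢ P (t-1-k)), (b:ℝ) ^ (4 * D + 3) / y := by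
    apply Finset.sum_le_sum
    intro x hx
    rw [Finset.mem_biUnion] at hx
    obtain ⟨k, hk, hx⟩ := hx
    rw [Finset.mem_range] at hk
    rw [Finset.mem_product, hPmem, hPmem] at hx
    obtain ⟨⟨⟨p1, p2⟩, p3, p4⟩, ⟨⟨q1, q2⟩, q3, q4⟩⟩ := hx
    have hx1 := p3.pos
    have hx2 := q3.pos
    have h5 : y ≤ b ^ (4*D+3) * (x.1 * x.2) := by
      refine hy2.le.trans ?_
      refine le_trans ?_ (Nat.mul_le_mul (le_refl _) (Nat.mul_le_mul p1 q1))
      rw [← pow_add, ← pow_add]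
      apply hpowle
      have : (D*t+k) + (D*t+(t-1-k)) + 1 = 2*D*t + t := by
        have : 2*D*t = D*t + D*t := by ring
        omega
      nlinarith
    rw [div_le_div_iff₀ (by positivity) (by positivity), one_mul]
    exact_mod_cast h5
  rw [Finset.sum_const, nsmul_eq_mul] at h3
  have h4 : (((Finset.range t).biUnion (fun k => P k ×ˢ P (t-1-k))).card : ℝ) ≤ (prs f y).card := by
    exact_mod_cast Finset.card_le_card hsub
  have hy0' : (0:ℝ) < y := by exact_mod_cast hy0
  have h5 : c1 / t ≤ (prs f y).card * ((b:ℝ) ^ (4 * D + 3) / y) := by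
    refine h1.trans (h3.trans ?_)
    gcongr
  have h6 : t * Real.log b ≤ Real.log y := by
    rw [← Real.log_pow]
    apply Real.log_le_log (by positivity)
    have : b ^ t ≤ y := le_trans (hpowle _ _ (by nlinarith)) hy1
    exact_mod_cast this
  have h7 : Real.log b / Real.log y ≤ 1 / t := by
    have : 0 < Real.log y := lt_of_lt_of_le (by positivity) h6
    rw [div_le_div_iff₀ this ht0']; linarith
  calc c1 * Real.log b * ((b:ℝ) ^ (4 * D + 3))⁻¹ * (y / Real.log y)
      = c1 * (Real.log b / Real.log y) * (y / (b:ℝ) ^ (4 * D + 3)) := by field_simp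
    _ ≤ c1 * (1 / t) * (y / (b:ℝ) ^ (4 * D + 3)) := by gcongr
    _ = c1 / t * (y / (b:ℝ) ^ (4 * D + 3)) := by ring
    _ ≤ (prs f y).card * ((b:ℝ) ^ (4 * D + 3) / y) * (y / (b:ℝ) ^ (4 * D + 3)) := by gcongr
    _ = (prs f y).card := by field_simp

theorem aux_prod (f : ℕ → ℤ) (hfpm : ∀ n : ℕ, 1 ≤ n → f n = 1 ∨ f n = -1)
    (c : ℝ) (hc : c ∈ Set.Ico (-1 : ℝ) 0)
    (hconv : ∃ L : ℝ, Filter.Tendsto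
      (fun N : ℕ => ∑ p ∈ N.primesBelow, (c - (f p : ℝ)) / p) Filter.atTop (nhds L)) (R : ℝ) :
    ∃ w0 : ℕ, ∀ w : ℕ, w0 ≤ w →
      R * Real.log w ≤ ∏ p ∈ w.primesBelow with f p = -1, (1 + 2 / (p:ℝ)) := by
  obtain ⟨L, hL⟩ := hconv
  have hc0 : c < 0 := hc.2
  have hev : ∀ᶠ w : ℕ in Filter.atTop, L - 1 < ∑ p ∈ w.primesBelow, (c - (f p : ℝ)) / p :=
    hL.eventually_const_lt (by linarith)
  have hlog : Filter.Tendsto (fun w : ℕ => Real.log (Real.log w)) Filter.atTop Filter.atTop :=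
    Real.tendsto_log_atTop.comp (Real.tendsto_log_atTop.comp tendsto_natCast_atTop_atTop)
  have hev2 := hlog.eventually_ge_atTop ((Real.log (|R| + 1) + 9 + 1 - L) / (-c) + 3)
  obtain ⟨w0, hw0⟩ := Filter.eventually_atTop.mp ((hev.and hev2).and (Filter.eventually_ge_atTop 2))
  refine ⟨w0, fun w hw => ?_⟩
  obtain ⟨⟨h1, h2⟩, hw2⟩ := hw0 w hw
  set E := ∑ p ∈ w.primesBelow, 1 / (p:ℝ) with hE
  have h3 := aux_euler w hw2
  rw [← hE] at h3
  have hlw : 0 < Real.log w := Real.log_pos (by exact_mod_cast (by omega : 1 < w))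
  have h4 : Real.log (Real.log w) ≤ E + 3 := by
    rwa [Real.log_le_iff_le_exp hlw]
  have h5 : (Real.log (|R| + 1) + 9 + 1 - L) ≤ (-c) * E := by
    have : (Real.log (|R| + 1) + 9 + 1 - L) / (-c) ≤ E := by linarith
    rw [div_le_iff₀ (by linarith)] at this
    linarith
  have h6 : ∑ p ∈ w.primesBelow, (c - (f p : ℝ)) / p
      = ∑ p ∈ w.primesBelow with f p = -1, 2 / (p:ℝ) - (1 - c) * E := by
    rw [hE, Finset.sum_filter, Finset.mul_sum, ← Finset.sum_sub_distrib]
    apply Finset.sum_congr rfl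
    intro p hp
    rcases hfpm p (Nat.prime_of_mem_primesBelow hp).one_le with h | h
    · rw [h]; simp; ring
    · rw [h]; simp; ring
  have h7 : Real.exp (∑ p ∈ w.primesBelow with f p = -1, 2 / (p:ℝ) - 6)
      ≤ ∏ p ∈ w.primesBelow with f p = -1, (1 + 2 / (p:ℝ)) := by
    have : Real.exp (∑ p ∈ w.primesBelow with f p = -1, (2 / (p:ℝ) - 2 * (1 / ((p:ℝ) * (p-1)))))
      ≤ ∏ p ∈ w.primesBelow with f p = -1, (1 + 2 / (p:ℝ)) := by
      rw [Real.exp_sum]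
      apply Finset.prod_le_prod
      · intro p _; positivity
      · intro p hp
        have hp2 : (2:ℝ) ≤ p := by exact_mod_cast Nat.two_le_of_mem_primesBelow (Finset.mem_filter.mp hp).1
        rw [← Real.le_log_iff_exp_le (by positivity)]
        refine le_trans ?_ (Real.le_log_one_add_of_nonneg (by positivity))
        have e1 : 2 * (2 / (p:ℝ)) / (2 / (p:ℝ) + 2) = 2 / (p + 1) := by field_simp; ring
        have e2 : 2 / (p:ℝ) - 2 / (p + 1) = 2 * (1 / ((p:ℝ) * (p+1))) := by field_simp; ring
        have e3 : 1 / ((p:ℝ) * (p+1)) ≤ 1 / ((p:ℝ) * (p-1)) := by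
          apply one_div_le_one_div_of_le
          · nlinarith
          · nlinarith
        rw [e1]; linarith
    refine le_trans ?_ this
    rw [Real.exp_le_exp, Finset.sum_sub_distrib, ← Finset.mul_sum]
    have h8 : ∑ p ∈ w.primesBelow with f p = -1, 1 / ((p:ℝ) * (p-1)) ≤ 3 := by
      refine le_trans (Finset.sum_le_sum_of_subset_of_nonneg (Finset.filter_subset _ _) ?_)
        ((aux_sq w).trans ?_)
      · intro p hp _
        have hp2 : (2:ℝ) ≤ p := by exact_mod_cast Nat.two_le_of_mem_primesBelow hp
        have : 0 ≤ (p:ℝ) * (p-1) := by nlinarith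
        positivity
      · have : 0 ≤ 3 / (w:ℝ) := by positivity
        linarith
    linarith
  refine le_trans ?_ h7
  have hR : 0 < |R| + 1 := by positivity
  calc R * Real.log w ≤ (|R| + 1) * Real.exp (E + 3) := by
        have : R ≤ |R| + 1 := by linarith [le_abs_self R]
        gcongr
    _ = Real.exp (Real.log (|R| + 1) + (E + 3)) := by
        rw [Real.exp_add (Real.log (|R| + 1)), Real.exp_log hR]
    _ ≤ _ := by
        rw [Real.exp_le_exp]
        linarith

theorem aux_count (f : ℕ → ℤ) (hfpm : ∀ n : ℕ, 1 ≤ n → f n = 1 ∨ f n = -1) (A w N : ℕ)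
    (hw : 2 ≤ w) (hN : w ^ (A + 4) ≤ N) :
    ∑ T ∈ (w.primesBelow.filter (fun p => f p = -1)).powerset with ∏ p ∈ T, p ≤ w ^ A,
      (2:ℤ) ^ T.card * (prs f (N / ∏ p ∈ T, p)).card
    ≤ 2 * ∑ n ∈ Finset.Icc 1 N, ∏ p ∈ n.primeFactors, (1 - f p) := by
  classical
  set X := ((w.primesBelow.filter (fun p => f p = -1)).powerset.filter
    (fun T => ∏ p ∈ T, p ≤ w ^ A)).sigma (fun T => prs f (N / ∏ p ∈ T, p)) with hX
  have hXmem : ∀ x ∈ X, (∀ r ∈ x.1, r.Prime ∧ r < w ∧ f r = -1) ∧ x.2.1.Prime ∧ x.2.2.Prime ∧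
      f x.2.1 = -1 ∧ f x.2.2 = -1 ∧ w ≤ x.2.1 ∧ w ≤ x.2.2 ∧ (∏ p ∈ x.1, p) * (x.2.1 * x.2.2) ≤ N ∧
      0 < ∏ p ∈ x.1, p := by
    rintro ⟨T, p, q⟩ hx
    simp only [hX, Finset.mem_sigma, Finset.mem_filter, Finset.mem_powerset, prs] at hx
    obtain ⟨⟨hT, hTA⟩, -, hp, hq, hfp, hfq, hp4, hq4, hpq⟩ := hx
    have hTr : ∀ r ∈ T, r.Prime ∧ r < w ∧ f r = -1 := by
      intro r hr
      have := hT hr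
      rw [Finset.mem_filter, Nat.mem_primesBelow] at this
      exact ⟨this.1.2, this.1.1, this.2⟩
    have hpos : 0 < ∏ p ∈ T, p := Finset.prod_pos (fun r hr => (hTr r hr).1.pos)
    have hw4 : w ^ 4 ≤ N / ∏ p ∈ T, p := by
      rw [Nat.le_div_iff_mul_le hpos]
      calc w ^ 4 * ∏ p ∈ T, p ≤ w ^ 4 * w ^ A := Nat.mul_le_mul (le_refl _) hTA
        _ = w ^ (A + 4) := by ring
        _ ≤ N := hN
    refine ⟨hTr, hp, hq, hfp, hfq, ?_, ?_, ?_, hpos⟩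
    · exact (Nat.pow_le_pow_iff_left (by norm_num)).mp (hw4.trans hp4)
    · exact (Nat.pow_le_pow_iff_left (by norm_num)).mp (hw4.trans hq4)
    · rw [Nat.le_div_iff_mul_le hpos] at hpq
      show (∏ p ∈ T, p) * (p * q) ≤ N
      linarith
  set φ : (Σ _ : Finset ℕ, ℕ × ℕ) → ℕ := fun x => (∏ p ∈ x.1, p) * (x.2.1 * x.2.2) with hφ
  have hL : ∑ T ∈ (w.primesBelow.filter (fun p => f p = -1)).powerset with ∏ p ∈ T, p ≤ w ^ A,
      (2:ℤ) ^ T.card * (prs f (N / ∏ p ∈ T, p)).card = ∑ x ∈ X, (2:ℤ) ^ x.1.card := by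
    rw [hX, Finset.sum_sigma]
    apply Finset.sum_congr rfl
    intro T _
    show _ = ∑ s ∈ prs f (N / ∏ p ∈ T, p), (2:ℤ) ^ T.card
    rw [Finset.sum_const, nsmul_eq_mul, mul_comm]
  have hmaps : ∀ x ∈ X, φ x ∈ Finset.Icc 1 N := by
    intro x hx
    obtain ⟨h1, h2, h3, h4, h5, h6, h7, h8, h9⟩ := hXmem x hx
    rw [Finset.mem_Icc]
    refine ⟨?_, h8⟩
    have := h2.pos
    have := h3.pos
    show 0 < _
    positivity
  rw [hL, ← Finset.sum_fiberwise_of_maps_to hmaps, Finset.mul_sum]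
  apply Finset.sum_le_sum
  intro n hn
  have hHn : 0 ≤ ∏ p ∈ n.primeFactors, (1 - f p) := by
    apply Finset.prod_nonneg
    intro p hp
    rcases hfpm p (Nat.prime_of_mem_primeFactors hp).one_le with h | h <;> rw [h] <;> norm_num
  -- a prime dividing the product of T lies in T
  have hdvd : ∀ T : Finset ℕ, (∀ r ∈ T, r.Prime) → ∀ r : ℕ, r.Prime → r ∣ ∏ p ∈ T, p → r ∈ T := by
    intro T hT r hr hd
    obtain ⟨s, hs, hrs⟩ := (hr.prime.dvd_finsetProd_iff _).mp hd
    rwa [(Nat.prime_dvd_prime_iff_eq hr (hT s hs)).mp hrs]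
  have hterm : ∀ x ∈ X.filter (fun x => φ x = n), (2:ℤ) ^ x.1.card ≤ ∏ p ∈ n.primeFactors, (1 - f p) := by
    intro x hx
    rw [Finset.mem_filter] at hx
    obtain ⟨h1, h2, h3, h4, h5, h6, h7, h8, h9⟩ := hXmem x hx.1
    have hn0 : n ≠ 0 := by rw [Finset.mem_Icc] at hn; omega
    have hall : ∀ r ∈ n.primeFactors, f r = -1 := by
      intro r hr
      have hrp := Nat.prime_of_mem_primeFactors hr
      have hrd := Nat.dvd_of_mem_primeFactors hr
      rw [← hx.2, hφ] at hrd
      rcases (hrp.dvd_mul).mp hrd with h | h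
      · exact (h1 r (hdvd _ (fun s hs => (h1 s hs).1) r hrp h)).2.2
      · rcases (hrp.dvd_mul).mp h with h | h
        · rwa [(Nat.prime_dvd_prime_iff_eq hrp h2).mp h]
        · rwa [(Nat.prime_dvd_prime_iff_eq hrp h3).mp h]
    have he : ∏ p ∈ n.primeFactors, (1 - f p) = 2 ^ n.primeFactors.card := by
      rw [← Finset.prod_const]
      apply Finset.prod_congr rfl
      intro r hr
      rw [hall r hr]; norm_num
    rw [he]
    apply pow_le_pow_right₀ (by norm_num)
    apply Finset.card_le_card
    intro r hr
    rw [Nat.mem_primeFactors]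
    refine ⟨(h1 r hr).1, ?_, hn0⟩
    rw [← hx.2]
    exact (Finset.dvd_prod_of_mem (fun p => p) hr).mul_right _
  have hcard : (X.filter (fun x => φ x = n)).card ≤ 2 := by
    rcases (X.filter (fun x => φ x = n)).eq_empty_or_nonempty with he | ⟨x, hx⟩
    · rw [he]; simp
    · refine le_trans (Finset.card_le_card (t := {⟨x.1, (x.2.1, x.2.2)⟩, ⟨x.1, (x.2.2, x.2.1)⟩}) ?_) Finset.card_le_two
      rintro ⟨T', p', q'⟩ hx'
      obtain ⟨T, p, q⟩ := x
      rw [Finset.mem_filter] at hx hx'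
      obtain ⟨h1, h2, h3, h4, h5, h6, h7, h8, h9⟩ := hXmem _ hx.1
      obtain ⟨h1', h2', h3', h4', h5', h6', h7', h8', h9'⟩ := hXmem _ hx'.1
      have heq : (∏ r ∈ T', r) * (p' * q') = (∏ r ∈ T, r) * (p * q) := hx'.2.trans hx.2.symm
      simp only at h1 h2 h3 h4 h5 h6 h7 h8 h9 h1' h2' h3' h4' h5' h6' h7' h8' h9'
      have hnd : ∀ r : ℕ, r.Prime → w ≤ r → ¬ r ∣ ∏ s ∈ T, s := by
        intro r hr hwr hd
        have := (h1 r (hdvd T (fun s hs => (h1 s hs).1) r hr hd)).2.1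
        omega
      have hfin : ∀ q1 q2 : ℕ, q1.Prime → q2.Prime → w ≤ q1 → (∏ r ∈ T', r) * q1 = (∏ r ∈ T, r) * q2 →
          T' = T ∧ q1 = q2 := by
        intro q1 q2 hq1 hq2 hwq h
        have hd : q1 ∣ (∏ r ∈ T, r) * q2 := by rw [← h]; exact dvd_mul_left _ _
        rcases (hq1.dvd_mul).mp hd with hd | hd
        · exact absurd hd (hnd q1 hq1 hwq)
        · have hqq := (Nat.prime_dvd_prime_iff_eq hq1 hq2).mp hd
          subst hqq
          have hpp := Nat.eq_of_mul_eq_mul_right hq1.pos h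
          refine ⟨?_, rfl⟩
          rw [← Nat.primeFactors_prod (s := T') (fun r hr => (h1' r hr).1),
            ← Nat.primeFactors_prod (s := T) (fun r hr => (h1 r hr).1), hpp]
      have hd : p' ∣ (∏ r ∈ T, r) * (p * q) := by
        rw [← heq]; exact (dvd_mul_right _ _).mul_left _
      rcases (h2'.dvd_mul).mp hd with hd | hd
      · exact absurd hd (hnd p' h2' h6')
      · rcases (h2'.dvd_mul).mp hd with hd | hd
        · have := (Nat.prime_dvd_prime_iff_eq h2' h2).mp hd
          subst this
          obtain ⟨rfl, rfl⟩ := hfin q' q h3' h3 h7' (by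
            apply Nat.eq_of_mul_eq_mul_right h2'.pos
            linarith)
          simp
        · have := (Nat.prime_dvd_prime_iff_eq h2' h3).mp hd
          subst this
          obtain ⟨rfl, rfl⟩ := hfin q' p h3' h2 h7' (by
            apply Nat.eq_of_mul_eq_mul_right h2'.pos
            linarith)
          simp
  refine le_trans (Finset.sum_le_card_nsmul _ _ _ hterm) ?_
  rw [nsmul_eq_mul]
  have : ((X.filter (fun x => φ x = n)).card : ℤ) ≤ 2 := by exact_mod_cast hcard
  gcongr

theorem aux_final (f : ℕ → ℤ)
    (hf1 : f 1 = 1)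
    (hfmul : ∀ a b : ℕ, f (a * b) = f a * f b)
    (hfpm : ∀ n : ℕ, 1 ≤ n → f n = 1 ∨ f n = -1)
    (A Y w N : ℕ) (c0 R : ℝ) (hc0 : 0 < c0)
    (hY : ∀ y : ℕ, Y ≤ y → c0 * (y / Real.log y) ≤ (prs f y).card)
    (hA : ∀ S : Finset ℕ, S ⊆ w.primesBelow → (1/2:ℝ) * ∏ p ∈ S, (1 + 2/(p:ℝ)) ≤
      ∑ T ∈ S.powerset with ∏ p ∈ T, p ≤ w ^ A, (2:ℝ)^T.card / ((∏ p ∈ T, p : ℕ):ℝ))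
    (hw : 2 ≤ w) (hYw : Y ≤ w) (hN : w ^ (A + 4) ≤ N)
    (hlog : Real.log N ≤ 2 * (A + 4 : ℕ) * Real.log w)
    (hR : 16 * (A + 4 : ℕ) * (|R| + 1) / c0 * Real.log w ≤
      ∏ p ∈ w.primesBelow with f p = -1, (1 + 2 / (p:ℝ))) :
    R ≤ ∑ n ∈ Finset.Icc 1 N, ((ArithmeticFunction.moebius n * f n : ℤ) : ℝ) / n := by
  have hww : w ≤ w ^ 4 := Nat.le_self_pow (by norm_num) w
  have hN2 : 2 ≤ N := (hw.trans (Nat.le_self_pow (by omega) w)).trans hN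
  have hNpos : (0:ℝ) < N := by exact_mod_cast (by omega : 0 < N)
  have hlN : 0 < Real.log N := Real.log_pos (by exact_mod_cast (by omega : 1 < N))
  have hlw : 0 < Real.log w := Real.log_pos (by exact_mod_cast (by omega : 1 < w))
  have hS := aux_S f hfpm N (by omega)
  have hcnt := aux_count f hfpm A w N hw hN
  have hran := hA (w.primesBelow.filter (fun p => f p = -1)) (Finset.filter_subset _ _)
  set P := ∏ p ∈ w.primesBelow with f p = -1, (1 + 2 / (p:ℝ)) with hP
  set H := ∑ n ∈ Finset.Icc 1 N, ∏ p ∈ n.primeFactors, (1 - f p) with hH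
  have hHS : (∑ n ∈ Finset.Icc 1 N,
      ((∑ d ∈ n.divisors, ArithmeticFunction.moebius d * f d : ℤ):ℝ)) = (H:ℝ) := by
    rw [hH, Int.cast_sum]
    apply Finset.sum_congr rfl
    intro n hn
    rw [aux_H f hf1 hfmul n (by have := (Finset.mem_Icc.mp hn).1; omega)]
  rw [hHS] at hS
  have hcntR : (∑ T ∈ (w.primesBelow.filter (fun p => f p = -1)).powerset with
      ∏ p ∈ T, p ≤ w ^ A, (2:ℝ) ^ T.card * ((prs f (N / ∏ p ∈ T, p)).card : ℝ)) ≤ 2 * (H:ℝ) := by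
    exact_mod_cast hcnt
  have hlow : c0 * N / (2 * Real.log N) * (∑ T ∈ (w.primesBelow.filter (fun p => f p = -1)).powerset
      with ∏ p ∈ T, p ≤ w ^ A, (2:ℝ)^T.card / ((∏ p ∈ T, p : ℕ):ℝ)) ≤ 2 * (H:ℝ) := by
    refine le_trans ?_ hcntR
    rw [Finset.mul_sum]
    apply Finset.sum_le_sum
    intro T hT
    rw [Finset.mem_filter, Finset.mem_powerset] at hT
    obtain ⟨hT, hTA⟩ := hT
    have hpos : 0 < ∏ p ∈ T, p := Finset.prod_pos (fun r hr =>
      (Nat.prime_of_mem_primesBelow (Finset.mem_filter.mp (hT hr)).1).pos)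
    set m := ∏ p ∈ T, p with hm
    have hw4 : w ^ 4 ≤ N / m := by
      rw [Nat.le_div_iff_mul_le hpos]
      calc w ^ 4 * m ≤ w ^ 4 * w ^ A := Nat.mul_le_mul (le_refl _) hTA
        _ = w ^ (A + 4) := by ring
        _ ≤ N := hN
    have hy := hY (N / m) (by omega)
    have hy2 : 2 ≤ N / m := by omega
    have hyN : N / m ≤ N := Nat.div_le_self _ _
    have hmR : (0:ℝ) < m := by exact_mod_cast hpos
    have hly : 0 < Real.log ((N / m : ℕ):ℝ) :=
      Real.log_pos (by exact_mod_cast (by omega : 1 < N / m))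
    have hlyN : Real.log ((N / m : ℕ):ℝ) ≤ Real.log N :=
      Real.log_le_log (by exact_mod_cast (by omega : 0 < N / m)) (by exact_mod_cast hyN)
    have hhalf : (N:ℝ) / (2 * m) ≤ ((N / m : ℕ):ℝ) := by
      rw [div_le_iff₀ (by positivity)]
      have h1 : N < (N / m + 1) * m := by
        have h2 := Nat.div_add_mod N m
        have h3 := Nat.mod_lt N hpos
        nlinarith
      have h4 : N ≤ (N / m) * (2 * m) := by nlinarith
      exact_mod_cast h4
    calc c0 * N / (2 * Real.log N) * ((2:ℝ) ^ T.card / (m:ℝ))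
        = (2:ℝ) ^ T.card * (c0 * ((N:ℝ) / (2 * m) / Real.log N)) := by field_simp
      _ ≤ (2:ℝ) ^ T.card * (c0 * (((N / m : ℕ):ℝ) / Real.log ((N / m : ℕ):ℝ))) := by gcongr
      _ ≤ _ := by gcongr
  have hK : (0:ℝ) < ((A + 4 : ℕ):ℝ) := by positivity
  set K : ℝ := ((A + 4 : ℕ):ℝ) with hKdef
  have h1 : c0 * N / (2 * Real.log N) * (1 / 2 * P) ≤ 2 * (H:ℝ) :=
    le_trans (mul_le_mul_of_nonneg_left hran (by positivity)) hlow
  have h2 : c0 * N / (2 * Real.log N) * (1 / 2 * (16 * K * (|R| + 1) / c0 * Real.log w))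
      ≤ 2 * (H:ℝ) :=
    le_trans (mul_le_mul_of_nonneg_left (by linarith) (by positivity)) h1
  have h3 : c0 * N / (2 * Real.log N) * (1 / 2 * (16 * K * (|R| + 1) / c0 * Real.log w))
      = 2 * (N * (|R| + 1)) * (2 * K * Real.log w / Real.log N) := by field_simp; ring
  have h4 : 1 ≤ 2 * K * Real.log w / Real.log N := by
    rw [le_div_iff₀ hlN]; linarith
  have h5 : N * (|R| + 1) ≤ (H:ℝ) := by
    have : 0 ≤ 2 * ((N:ℝ) * (|R| + 1)) := by positivity
    nlinarith
  have h6 : |R| + 1 ≤ (H:ℝ) / N := by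
    rw [le_div_iff₀ hNpos]; linarith
  linarith [le_abs_self R]

/-- If `f` is completely multiplicative with values in `{-1, 1}`, `c ∈ [-1, 0)`, and
`∑_p (c - f p)/p` converges, then `∑_{n ≤ x} μ n * f n / n → ∞`. -/
theorem stmt_7 (f : ℕ → ℤ)
    (hf1 : f 1 = 1)
    (hfmul : ∀ a b : ℕ, f (a * b) = f a * f b)
    (hfpm : ∀ n : ℕ, 1 ≤ n → f n = 1 ∨ f n = -1)
    (c : ℝ) (hc : c ∈ Set.Ico (-1 : ℝ) 0)
    (hconv : ∃ L : ℝ, Filter.Tendsto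
      (fun N : ℕ => ∑ p ∈ N.primesBelow, (c - (f p : ℝ)) / p) Filter.atTop (nhds L)) :
    Filter.Tendsto
      (fun N : ℕ => ∑ n ∈ Finset.Icc 1 N, ((ArithmeticFunction.moebius n * f n : ℤ) : ℝ) / n)
      Filter.atTop Filter.atTop := by
  obtain ⟨A, hA⟩ := aux_rankin
  obtain ⟨c0, hc0, Y, hY⟩ := aux_pairs f (aux_block f hfpm c hc aux_mertens hconv)
  rw [Filter.tendsto_atTop]
  intro R
  obtain ⟨w0, hw0⟩ := aux_prod f hfpm c hc hconv (16 * (A + 4 : ℕ) * (|R| + 1) / c0)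
  filter_upwards [Filter.eventually_ge_atTop ((2 ^ (A + 4)) ^ (w0 + Y + 2))] with N hN
  have hb : 1 < 2 ^ (A + 4) := Nat.one_lt_two_pow (by omega)
  have hN0 : N ≠ 0 := by
    have : 0 < (2 ^ (A + 4)) ^ (w0 + Y + 2) := by positivity
    omega
  set l := Nat.log (2 ^ (A + 4)) N with hl
  have hll : w0 + Y + 2 ≤ l := Nat.le_log_of_pow_le hb hN
  have hlw : l < 2 ^ l := Nat.lt_two_pow_self
  have hlo : (2 ^ (A + 4)) ^ l ≤ N := Nat.pow_log_le_self _ hN0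
  have hhi : N < (2 ^ (A + 4)) ^ (l + 1) := Nat.lt_pow_succ_log_self hb N
  refine aux_final f hf1 hfmul hfpm A Y (2 ^ l) N c0 R hc0 hY (hA (2 ^ l) (by omega))
    (by omega) (by omega) ?_ ?_ (hw0 (2 ^ l) (by omega))
  · rw [← pow_mul, mul_comm, pow_mul]; exact hlo
  · have h1 : (N:ℝ) ≤ ((2:ℝ) ^ (A + 4)) ^ (l + 1) := by exact_mod_cast hhi.le
    have h2 := Real.log_le_log (by exact_mod_cast Nat.pos_of_ne_zero hN0) h1
    rw [Real.log_pow, Real.log_pow] at h2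
    push_cast at h2 ⊢
    rw [Real.log_pow]
    have h3 : 0 < Real.log 2 := Real.log_pos (by norm_num)
    have h4 : (1:ℝ) ≤ l := by exact_mod_cast (by omega : 1 ≤ l)
    have h5 : 0 ≤ ((A:ℝ) + 4) * Real.log 2 := by positivity
    nlinarith
end

section
/- Let f : ℕ → ℤ be a completely multiplicative function taking values in {-1, 1}, and for σ > 1 let F(σ) = ∑_{n ≥ 1} f(n)/n^σ. Then there is a constant C > 0 such that for all σ > 1, F(σ) > 0 and |log F(σ) - ∑_p f(p)/p^σ| ≤ C, where the sum runs over primes p. (Indeed log F(σ) = ∑_p f(p)/p^σ + ∑_p ∑_{k ≥ 2} f(p)^k/(k p^{kσ}), and the double sum is bounded uniformly for σ > 1.) -/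
/-- The completely multiplicative summand `n ↦ f n / n ^ σ`, extended by `0` at `0`. -/
noncomputable def summandHom (f : ℕ → ℤ) (hf1 : f 1 = 1)
    (hfmul : ∀ a b : ℕ, f (a * b) = f a * f b) (σ : ℝ) : ℕ →*₀ ℝ where
  toFun n := if n = 0 then 0 else (f n : ℝ) / (n : ℝ) ^ σ
  map_zero' := by simp
  map_one' := by simp [hf1]
  map_mul' a b := by
    by_cases ha : a = 0
    · simp [ha]
    by_cases hb : b = 0
    · simp [hb]
    have h : a * b ≠ 0 := mul_ne_zero ha hb
    simp only [ha, hb, h, if_false, hfmul]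
    push_cast
    rw [Real.mul_rpow (by positivity) (by positivity), mul_div_mul_comm]

lemma log_term_bound {x : ℝ} (hx : |x| ≤ 1 / 2) :
    |-Real.log (1 - x) - x| ≤ 2 * x ^ 2 := by
  have h := Real.abs_log_sub_add_sum_range_le (x := x) (by linarith) 1
  simp only [Finset.sum_range_one, Nat.cast_zero, zero_add, pow_one, div_one] at h
  have e : |-Real.log (1 - x) - x| = |x + Real.log (1 - x)| := by
    rw [← abs_neg]; congr 1; ring
  rw [e]
  refine h.trans ?_
  rw [div_le_iff₀ (by linarith)]
  norm_num
  nlinarith [sq_nonneg x]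

/-- For a completely multiplicative `f` with values in `{-1, 1}` and
`F σ = ∑_{n ≥ 1} f n / n^σ` for `σ > 1`, there is a constant `C > 0` such that for all
`σ > 1` we have `F σ > 0` and `|log (F σ) - ∑_p f p / p^σ| ≤ C`. -/
theorem stmt_8 (f : ℕ → ℤ)
    (hf1 : f 1 = 1)
    (hfmul : ∀ a b : ℕ, f (a * b) = f a * f b)
    (hfpm : ∀ n : ℕ, 1 ≤ n → f n = 1 ∨ f n = -1)
    (F : ℝ → ℝ)
    (hF : ∀ σ : ℝ, 1 < σ → F σ = ∑' n : ℕ, (f (n + 1) : ℝ) / ((n : ℝ) + 1) ^ σ) :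
    ∃ C : ℝ, 0 < C ∧ ∀ σ : ℝ, 1 < σ →
      0 < F σ ∧
      |Real.log (F σ) - ∑' p : Nat.Primes, (f (p : ℕ) : ℝ) / (p : ℝ) ^ σ| ≤ C := by
  have hS : Summable (fun p : Nat.Primes => 2 * (1 / ((p : ℕ) : ℝ) ^ 2)) :=
    ((Real.summable_one_div_nat_pow.mpr (by norm_num : 1 < 2)).comp_injective
      Subtype.val_injective).mul_left 2
  have hS0 : 0 ≤ ∑' p : Nat.Primes, 2 * (1 / ((p : ℕ) : ℝ) ^ 2) :=
    tsum_nonneg fun p => by positivity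
  refine ⟨(∑' p : Nat.Primes, 2 * (1 / ((p : ℕ) : ℝ) ^ 2)) + 1, by linarith, ?_⟩
  intro σ hσ
  set g := summandHom f hf1 hfmul σ with hg
  have gdef : ∀ n : ℕ, n ≠ 0 → g n = (f n : ℝ) / (n : ℝ) ^ σ := by
    intro n hn
    change (if n = 0 then 0 else (f n : ℝ) / (n : ℝ) ^ σ) = _
    simp [hn]
  have gabs : ∀ n : ℕ, n ≠ 0 → |g n| = 1 / (n : ℝ) ^ σ := by
    intro n hn
    rw [gdef n hn, abs_div, abs_of_nonneg (by positivity : (0:ℝ) ≤ (n : ℝ) ^ σ)]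
    rcases hfpm n (Nat.one_le_iff_ne_zero.mpr hn) with h | h <;> simp [h]
  have gsum : Summable (fun n => ‖g n‖) := by
    refine Summable.of_nonneg_of_le (fun _ => norm_nonneg _) (fun n => ?_)
      (Real.summable_one_div_nat_rpow.mpr hσ)
    by_cases hn : n = 0
    · subst hn
      rw [map_zero, norm_zero]; positivity
    · rw [Real.norm_eq_abs, gabs n hn]
  have hFg : F σ = ∑' n, g n := by
    rw [hF σ hσ, gsum.of_norm.tsum_eq_zero_add, map_zero, zero_add]
    refine tsum_congr fun n => ?_
    rw [gdef (n + 1) (Nat.succ_ne_zero n)]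
    push_cast; rfl
  have gle : ∀ p : Nat.Primes, |g p| ≤ 1 / ((p : ℕ) : ℝ) := by
    intro p
    have hp1 : (1 : ℝ) ≤ ((p : ℕ) : ℝ) := by exact_mod_cast p.2.one_le
    rw [gabs p p.2.ne_zero]
    refine one_div_le_one_div_of_le (by linarith) ?_
    exact Real.self_le_rpow_of_one_le hp1 hσ.le
  have ghalf : ∀ p : Nat.Primes, |g p| ≤ 1 / 2 := by
    intro p
    refine (gle p).trans (one_div_le_one_div_of_le (by norm_num) ?_)
    exact_mod_cast p.2.two_le
  have hb : ∀ p : Nat.Primes, ‖-Real.log (1 - g p) - g p‖ ≤ 2 * (1 / ((p : ℕ) : ℝ) ^ 2) := by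
    intro p
    refine (log_term_bound (ghalf p)).trans ?_
    have := pow_le_pow_left₀ (abs_nonneg _) (gle p) 2
    rw [sq_abs, div_pow, one_pow] at this
    linarith
  have gps : Summable (fun p : Nat.Primes => g p) :=
    gsum.of_norm.comp_injective Subtype.val_injective
  have hd : Summable (fun p : Nat.Primes => -Real.log (1 - g p) - g p) :=
    Summable.of_norm_bounded hS hb
  have hl : Summable (fun p : Nat.Primes => -Real.log (1 - g p)) := by
    simpa using hd.add gps
  have hl' : Summable (fun p : Nat.Primes => Real.log ((1 - g p)⁻¹)) := by
    simpa only [Real.log_inv] using hl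
  have hpos : ∀ p : Nat.Primes, 0 < (1 - g p)⁻¹ := by
    intro p
    have := (abs_le.mp (ghalf p)).2
    exact inv_pos.mpr (by linarith)
  have hexp : F σ = Real.exp (∑' p : Nat.Primes, Real.log ((1 - g p)⁻¹)) := by
    rw [hFg, Real.rexp_tsum_eq_tprod hpos hl',
      EulerProduct.eulerProduct_completely_multiplicative_tprod gsum]
  refine ⟨hexp ▸ Real.exp_pos _, ?_⟩
  have e2 : ∑' p : Nat.Primes, (f (p : ℕ) : ℝ) / (p : ℝ) ^ σ = ∑' p : Nat.Primes, g p :=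
    tsum_congr fun p => (gdef p p.2.ne_zero).symm
  rw [hexp, Real.log_exp, e2]
  simp only [Real.log_inv]
  rw [← hl.tsum_sub gps]
  have := tsum_of_norm_bounded hS.hasSum hb
  rw [Real.norm_eq_abs] at this
  linarith
end

section
/- Let f : ℕ → ℤ be a completely multiplicative function taking values in {-1, 1}, and let c ∈ (0, 1] be a real number. Suppose ∑_{p ≤ x} f(p) = c·(x/log x)·(1 + o(1)) as x → ∞, the sum running over primes p. Then the partial sums of f are unbounded: lim sup_{N→∞} |∑_{n=1}^{N} f(n)| = ∞. -/
open Filter Asymptotics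

lemma aux_abel (a w : ℕ → ℝ) (n : ℕ) :
    ∑ k ∈ Finset.range n, a k * w k = (∑ k ∈ Finset.range n, a k) * w n +
      ∑ k ∈ Finset.range n, (∑ j ∈ Finset.range (k + 1), a j) * (w k - w (k + 1)) := by
  induction n with
  | zero => simp
  | succ n ih =>
    rw [Finset.sum_range_succ, ih, Finset.sum_range_succ (fun k => _ * (w k - w (k+1))),
      Finset.sum_range_succ a n]
    ring

lemma aux_upper (a w : ℕ → ℝ) (C : ℝ) (hA : ∀ n, ∑ k ∈ Finset.range n, a k ≤ C)
    (hw : ∀ n, w (n + 1) ≤ w n) (hw0 : ∀ n, 0 ≤ w n) (n : ℕ) :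
    ∑ k ∈ Finset.range n, a k * w k ≤ C * w 0 := by
  rw [aux_abel]
  have h1 : ∑ k ∈ Finset.range n, (∑ j ∈ Finset.range (k + 1), a j) * (w k - w (k + 1))
      ≤ ∑ k ∈ Finset.range n, C * (w k - w (k + 1)) :=
    Finset.sum_le_sum fun k _ =>
      mul_le_mul_of_nonneg_right (hA _) (sub_nonneg.2 (hw k))
  rw [← Finset.mul_sum, Finset.sum_range_sub'] at h1
  have h2 := mul_le_mul_of_nonneg_right (hA n) (hw0 n)
  linarith

lemma aux_lower (a w : ℕ → ℝ) (N M n : ℕ) (hN : 1 ≤ N) (hNM : N ≤ M) (hMn : M ≤ n)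
    (hA : ∀ k, N ≤ k → 0 ≤ ∑ j ∈ Finset.range k, a j)
    (hw : ∀ n, 1 ≤ n → w (n + 1) ≤ w n) (hw0 : ∀ n, 0 ≤ w n) :
    ∑ k ∈ Finset.range M, (∑ j ∈ Finset.range (k + 1), a j) * (w k - w (k + 1)) ≤
    ∑ k ∈ Finset.range n, a k * w k := by
  rw [aux_abel a w n]
  have h1 : ∑ k ∈ Finset.range M, (∑ j ∈ Finset.range (k + 1), a j) * (w k - w (k + 1))
      ≤ ∑ k ∈ Finset.range n, (∑ j ∈ Finset.range (k + 1), a j) * (w k - w (k + 1)) := by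
    apply Finset.sum_le_sum_of_subset_of_nonneg
    · exact Finset.range_mono hMn
    · intro k _ hk
      simp only [Finset.mem_range, not_lt] at hk
      exact mul_nonneg (hA _ (by omega)) (sub_nonneg.2 (hw k (by omega)))
  have h2 := mul_nonneg (hA n (by omega)) (hw0 n)
  linarith

lemma aux_div : ¬ Summable (fun n : ℕ => 1 / ((n : ℝ) * Real.log n)) := by
  intro h
  have h' := (summable_condensed_iff_of_eventually_nonneg
    (f := fun n : ℕ => 1 / ((n : ℝ) * Real.log n)) ?_ ?_).2 h
  · have h2 : Summable (fun k : ℕ => Real.log 2 * ((2 : ℝ) ^ k *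
        (1 / (((2 ^ k : ℕ) : ℝ) * Real.log ((2 ^ k : ℕ) : ℝ))))) := h'.mul_left _
    apply Real.not_summable_one_div_natCast
    refine h2.congr fun k => ?_
    push_cast
    rw [Real.log_pow]
    have : Real.log 2 ≠ 0 := (Real.log_pos (by norm_num)).ne'
    rcases Nat.eq_zero_or_pos k with rfl | hk
    · simp
    · field_simp
  · exact Eventually.of_forall fun n => by
      have := Real.log_natCast_nonneg n
      simp only [Pi.zero_apply]
      positivity
  · filter_upwards [eventually_ge_atTop 2] with n hn
    have h1 : (2:ℝ) ≤ n := by exact_mod_cast hn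
    have h3 : 0 < Real.log n := Real.log_pos (by linarith)
    have h4 : Real.log n ≤ Real.log (n+1 : ℕ) := Real.log_le_log (by linarith) (by push_cast; linarith)
    apply one_div_le_one_div_of_le (by positivity)
    apply mul_le_mul _ h4 h3.le (by positivity)
    push_cast; linarith

lemma aux_exp {x : ℝ} (hx : x < 1) : Real.exp x ≤ (1 - x)⁻¹ := by
  rw [le_inv_comm₀ (Real.exp_pos x) (by linarith), ← Real.exp_neg]
  exact Real.one_sub_le_exp_neg x

/-- Main bound for a fixed exponent `s > 1`. -/
lemma aux_main (f : ℕ → ℤ)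
    (hf1 : f 1 = 1)
    (hfmul : ∀ a b : ℕ, f (a * b) = f a * f b)
    (hfpm : ∀ n : ℕ, 1 ≤ n → f n = 1 ∨ f n = -1) (C : ℝ)
    (hC : ∀ n, ∑ k ∈ Finset.range n, (f (k + 1) : ℝ) ≤ C)
    (N M : ℕ) (hN : 1 ≤ N) (hNM : N ≤ M)
    (hA : ∀ k, N ≤ k → 0 ≤ ∑ j ∈ Finset.range k, if j.Prime then (f j : ℝ) else 0)
    (s : ℝ) (hs : 1 < s) :
    Real.exp (∑ k ∈ Finset.range M, (∑ j ∈ Finset.range (k + 1),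
      if j.Prime then (f j : ℝ) else 0) * ((k : ℝ) ^ (-s) - ((k + 1 : ℕ) : ℝ) ^ (-s))) ≤ C := by
  have habs : ∀ n : ℕ, 1 ≤ n → |(f n : ℝ)| = 1 := by
    intro n hn
    rcases hfpm n hn with h | h <;> simp [h]
  let g : ℕ →*₀ ℝ :=
    { toFun := fun n => (f n : ℝ) * (n : ℝ) ^ (-s)
      map_zero' := by
        simp [Real.zero_rpow (by linarith : -s ≠ 0)]
      map_one' := by simp [hf1]
      map_mul' := fun m n => by
        rw [hfmul]; push_cast
        rw [Real.mul_rpow (by positivity) (by positivity)]; ring }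
  have hg : ∀ n, g n = (f n : ℝ) * (n : ℝ) ^ (-s) := fun n => rfl
  have hgn : ∀ n, ‖g n‖ = (n : ℝ) ^ (-s) := by
    intro n
    rcases Nat.eq_zero_or_pos n with rfl | hn
    · simp [Real.zero_rpow (by linarith : -s ≠ 0)]
    · rw [hg, norm_mul, Real.norm_eq_abs, habs n hn, one_mul, Real.norm_of_nonneg (by positivity)]
  have hsum : Summable (‖g ·‖) := by
    simp_rw [hgn]
    exact Real.summable_nat_rpow.2 (by linarith)
  have hdec : ∀ n : ℕ, 1 ≤ n → ((n + 1 : ℕ) : ℝ) ^ (-s) ≤ (n : ℝ) ^ (-s) := by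
    intro n hn
    apply Real.rpow_le_rpow_of_nonpos
    · exact_mod_cast hn
    · push_cast; linarith
    · linarith
  have hE := EulerProduct.eulerProduct_completely_multiplicative hsum
  have hup : ∑' n, g n ≤ C := by
    refine le_of_tendsto (hsum.of_norm.hasSum.tendsto_sum_nat.comp (tendsto_add_atTop_nat 1))
      (Eventually.of_forall fun n => ?_)
    simp only [Function.comp]
    rw [Finset.sum_range_succ', map_zero, add_zero]
    have := aux_upper (fun k => (f (k+1) : ℝ)) (fun k => ((k + 1 : ℕ) : ℝ) ^ (-s)) C hC
      (fun n => hdec (n+1) (by omega)) (fun n => by positivity) n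
    simpa [hg] using this
  refine le_trans (ge_of_tendsto hE ?_) hup
  filter_upwards [eventually_ge_atTop M] with n hn
  have h1 := aux_lower (fun j => if j.Prime then (f j : ℝ) else 0) (fun k => (k : ℝ) ^ (-s))
    N M n hN hNM hn hA hdec (fun n => by positivity)
  refine (Real.exp_le_exp.2 h1).trans ?_
  have h2 : ∑ k ∈ Finset.range n, (if k.Prime then (f k : ℝ) else 0) * (k : ℝ) ^ (-s)
      = ∑ p ∈ Nat.primesBelow n, g p := by
    rw [Nat.primesBelow, Finset.sum_filter]
    refine Finset.sum_congr rfl fun k _ => ?_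
    split_ifs <;> simp [hg]
  rw [h2, Real.exp_sum]
  refine Finset.prod_le_prod (fun _ _ => (Real.exp_pos _).le) fun p hp => aux_exp ?_
  have hp := Nat.prime_of_mem_primesBelow hp
  calc g p ≤ ‖g p‖ := le_abs_self _
    _ = (p : ℝ) ^ (-s) := hgn p
    _ < 1 := Real.rpow_lt_one_of_one_lt_of_neg (by exact_mod_cast hp.one_lt) (by linarith)

/-- If `f` is completely multiplicative with values in `{-1, 1}`, `c ∈ (0, 1]`, and
`∑_{p ≤ x} f p = c·(x/log x)·(1 + o(1))`, then the partial sums of `f` are unbounded. -/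
theorem stmt_9 (f : ℕ → ℤ)
    (hf1 : f 1 = 1)
    (hfmul : ∀ a b : ℕ, f (a * b) = f a * f b)
    (hfpm : ∀ n : ℕ, 1 ≤ n → f n = 1 ∨ f n = -1)
    (c : ℝ) (hc : c ∈ Set.Ioc (0 : ℝ) 1)
    (hasymp : (fun x : ℝ => (∑ p ∈ Nat.primesBelow (⌊x⌋₊ + 1), (f p : ℝ))
        - c * (x / Real.log x)) =o[atTop] (fun x : ℝ => x / Real.log x)) :
    ∀ C : ℝ, ∃ N : ℕ, C < |((∑ n ∈ Finset.Icc 1 N, f n : ℤ) : ℝ)| := by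
  by_contra! hcon
  obtain ⟨C, hC⟩ := hcon
  have hc0 := hc.1
  have hC' : ∀ n, ∑ k ∈ Finset.range n, (f (k + 1) : ℝ) ≤ C := by
    intro n
    refine le_trans (le_of_eq ?_) ((le_abs_self _).trans (hC n))
    push_cast
    rw [Finset.range_eq_Ico, Finset.sum_Ico_add' (fun k => (f k : ℝ)) 0 n 1]
    rfl
  have hlow := (hasymp.def (half_pos hc0))
  have hlow' := tendsto_natCast_atTop_atTop (R := ℝ) |>.eventually hlow
  obtain ⟨N₀, hN₀⟩ := eventually_atTop.1 hlow'
  set A : ℕ → ℝ := fun k => ∑ j ∈ Finset.range k, if j.Prime then (f j : ℝ) else 0 with hAdef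
  have hS : ∀ k, N₀ + 2 ≤ k → c / 2 * ((k : ℝ) / Real.log k) ≤ A (k + 1) := by
    intro k hk
    have h := hN₀ k (by omega)
    have hk2 : (2 : ℝ) ≤ k := by exact_mod_cast (by omega : 2 ≤ k)
    have hl : 0 < Real.log k := Real.log_pos (by linarith)
    have hpos : 0 < (k : ℝ) / Real.log k := by positivity
    rw [Real.norm_of_nonneg hpos.le, Real.norm_eq_abs, Nat.floor_natCast, Nat.primesBelow,
      Finset.sum_filter] at h
    have := (abs_le.1 h).1
    simp only [hAdef]
    linarith
  have hA : ∀ k, N₀ + 3 ≤ k → 0 ≤ A k := by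
    intro k hk
    obtain ⟨m, rfl⟩ : ∃ m, k = m + 1 := ⟨k - 1, by omega⟩
    refine le_trans ?_ (hS m (by omega))
    have := Real.log_natCast_nonneg m
    positivity
  have hbound : ∀ M, N₀ + 3 ≤ M → ∑ k ∈ Finset.range M,
      A (k + 1) * ((k : ℝ) ^ (-(1:ℝ)) - ((k + 1 : ℕ) : ℝ) ^ (-(1:ℝ))) ≤ C := by
    intro M hM
    have hcont : ∀ k : ℕ, ContinuousAt (fun s : ℝ => (k : ℝ) ^ (-s)) 1 := by
      intro k
      have : ContinuousAt (fun y : ℝ => (k : ℝ) ^ y) (-1) :=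
        Real.continuousAt_const_rpow' (by norm_num)
      exact ContinuousAt.comp' (f := fun s : ℝ => -s) (g := fun y : ℝ => (k : ℝ) ^ y)
        this continuousAt_neg
    have hct : ContinuousAt (fun s : ℝ => ∑ k ∈ Finset.range M,
      A (k + 1) * ((k : ℝ) ^ (-s) - ((k + 1 : ℕ) : ℝ) ^ (-s))) 1 :=
      tendsto_finsetSum _ fun k _ =>
        (continuousAt_const.mul ((hcont k).sub (hcont (k + 1))))
    have ht := (hct.tendsto).mono_left (nhdsWithin_le_nhds (s := Set.Ioi 1))
    refine le_of_tendsto ht ?_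
    filter_upwards [self_mem_nhdsWithin] with s hs
    have := aux_main f hf1 hfmul hfpm C hC' (N₀ + 3) M (by omega) hM hA s hs
    refine le_trans ?_ this
    linarith [Real.add_one_le_exp (∑ k ∈ Finset.range M,
      A (k + 1) * ((k : ℝ) ^ (-s) - ((k + 1 : ℕ) : ℝ) ^ (-s)))]
  set t : ℕ → ℝ := fun k => A (k + 1) * ((k : ℝ) ^ (-(1:ℝ)) - ((k + 1 : ℕ) : ℝ) ^ (-(1:ℝ))) with ht
  have hlt : ∀ k, N₀ + 3 ≤ k → c / 2 * (1 / (((k + 1 : ℕ) : ℝ) * Real.log (k + 1 : ℕ))) ≤ t k := by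
    intro k hk
    have hk2 : (2 : ℝ) ≤ k := by exact_mod_cast (by omega : 2 ≤ k)
    have hl : 0 < Real.log k := Real.log_pos (by linarith)
    have hll : Real.log k ≤ Real.log (k + 1 : ℕ) :=
      Real.log_le_log (by linarith) (by push_cast; linarith)
    have hd : (k : ℝ) ^ (-(1:ℝ)) - ((k + 1 : ℕ) : ℝ) ^ (-(1:ℝ)) = 1 / (k * (k + 1 : ℕ)) := by
      rw [Real.rpow_neg_one, Real.rpow_neg_one]
      push_cast
      field_simp
      ring
    simp only [ht]
    rw [hd]
    calc c / 2 * (1 / (((k + 1 : ℕ) : ℝ) * Real.log (k + 1 : ℕ)))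
        ≤ c / 2 * (1 / (((k + 1 : ℕ) : ℝ) * Real.log k)) := by gcongr
      _ = c / 2 * ((k : ℝ) / Real.log k) * (1 / (k * (k + 1 : ℕ))) := by field_simp
      _ ≤ _ := mul_le_mul_of_nonneg_right (hS k (by omega)) (by positivity)
  have htpos : ∀ k, N₀ + 3 ≤ k → 0 ≤ t k := fun k hk => by
    refine le_trans ?_ (hlt k hk)
    have := Real.log_natCast_nonneg (k + 1)
    positivity
  have hsumm : Summable (fun k => t (k + (N₀ + 3))) := by
    refine summable_of_sum_range_le (c := C - ∑ k ∈ Finset.range (N₀ + 3), t k)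
      (fun k => htpos _ (by omega)) fun n => ?_
    have h1 := hbound (N₀ + 3 + n) (by omega)
    rw [Finset.sum_range_add] at h1
    simp_rw [add_comm _ (N₀ + 3)]
    linarith
  have hs2 : Summable (fun k : ℕ => c / 2 *
      (1 / (((k + (N₀ + 3) + 1 : ℕ) : ℝ) * Real.log (k + (N₀ + 3) + 1 : ℕ)))) := by
    refine Summable.of_nonneg_of_le (fun k => ?_) (fun k => hlt (k + (N₀ + 3)) (by omega)) hsumm
    have := Real.log_natCast_nonneg (k + (N₀ + 3) + 1)
    positivity
  rw [summable_mul_left_iff (by positivity)] at hs2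
  exact aux_div ((summable_nat_add_iff (f := fun n : ℕ => 1 / ((n : ℝ) * Real.log n))
    (N₀ + 3 + 1)).1 hs2)
end

section
/- Let f : ℕ → ℤ be a completely multiplicative function taking values in {-1, 1}, and let c ∈ [-1, 0) be a real number. Suppose ∑_{p ≤ x} f(p) = c·(x/log x)·(1 + o(1)) as x → ∞, the sum running over primes p. Then the partial sums of μ·f are unbounded: lim sup_{N→∞} |∑_{n=1}^{N} μ(n) f(n)| = ∞, where μ is the Möbius function. -/
open Filter Asymptotics

lemma abel_aux (a w : ℕ → ℝ) (N : ℕ) :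
    ∑ k ∈ Finset.range N, a k * w k =
      (∑ j ∈ Finset.range N, a j) * w N +
        ∑ k ∈ Finset.range N, (∑ j ∈ Finset.range (k + 1), a j) * (w k - w (k + 1)) := by
  induction N with
  | zero => simp
  | succ n ih =>
    rw [Finset.sum_range_succ, ih,
      Finset.sum_range_succ (fun k => (∑ j ∈ Finset.range (k + 1), a j) * (w k - w (k + 1))) n,
      Finset.sum_range_succ a n]
    ring

lemma w_anti {s : ℝ} (hs : 1 ≤ s) {k : ℕ} (hk : 1 ≤ k) :
    ((k + 1 : ℕ) : ℝ) ^ (-s) ≤ (k : ℝ) ^ (-s) := by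
  apply Real.rpow_le_rpow_of_nonpos
  · exact_mod_cast hk
  · push_cast; linarith
  · linarith

lemma loglog_aux (K : ℕ) (hK : 3 ≤ K) (M : ℕ) (hM : K ≤ M) :
    (Real.log (Real.log M) - Real.log (Real.log K)) / 2 ≤
      ∑ k ∈ Finset.Ico K M, 1 / (((k : ℝ) + 1) * Real.log k) := by
  induction M, hM using Nat.le_induction with
  | base => simp
  | succ n hn ih =>
    rw [Finset.sum_Ico_succ_top hn]
    have hn3 : (3 : ℝ) ≤ n := by exact_mod_cast hK.trans hn
    have hl : 0 < Real.log n := Real.log_pos (by linarith)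
    have hl' : 0 < Real.log ((n : ℝ) + 1) := Real.log_pos (by linarith)
    have h1 : Real.log (Real.log ((n : ℝ) + 1)) - Real.log (Real.log n) ≤
        1 / ((n : ℝ) * Real.log n) := by
      rw [← Real.log_div hl'.ne' hl.ne']
      refine (Real.log_le_sub_one_of_pos (by positivity)).trans ?_
      have h2 : Real.log ((n : ℝ) + 1) - Real.log n ≤ 1 / n := by
        rw [← Real.log_div (by linarith) (by linarith)]
        refine (Real.log_le_sub_one_of_pos (by positivity)).trans (le_of_eq ?_)
        field_simp
        ring
      have h3 : Real.log ((n : ℝ) + 1) / Real.log n - 1 =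
          (Real.log ((n : ℝ) + 1) - Real.log n) / Real.log n := by field_simp
      rw [h3, ← div_div]
      gcongr
    have h4 : 1 / ((n : ℝ) * Real.log n) / 2 ≤ 1 / (((n : ℝ) + 1) * Real.log n) := by
      rw [div_div]
      apply one_div_le_one_div_of_le (by positivity)
      nlinarith
    push_cast
    linarith

lemma exp_le_one_sub {x : ℝ} (hx : |x| ≤ 1 / 2) : Real.exp (-x - x ^ 2) ≤ 1 - x := by
  obtain ⟨h1, h2⟩ := abs_le.mp hx
  have h : 1 ≤ (1 - x) * Real.exp (x + x ^ 2) := by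
    rcases le_total 0 x with hx0 | hx0
    · have h3 := Real.quadratic_le_exp_of_nonneg (show 0 ≤ x + x ^ 2 by positivity)
      refine le_trans ?_ (mul_le_mul_of_nonneg_left h3 (by linarith))
      have h4 : 0 ≤ (1 - x) * (1 + x) ^ 2 / 2 - x := by
        nlinarith [mul_nonneg hx0 (sub_nonneg.mpr h2), mul_nonneg hx0 hx0,
          mul_nonneg (mul_nonneg hx0 hx0) (sub_nonneg.mpr h2)]
      nlinarith [mul_nonneg (sq_nonneg x) h4]
    · have h3 := Real.add_one_le_exp (x + x ^ 2)
      refine le_trans ?_ (mul_le_mul_of_nonneg_left h3 (by linarith))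
      nlinarith [mul_nonneg (neg_nonneg.mpr hx0) (sq_nonneg x)]
  rw [show -x - x ^ 2 = -(x + x ^ 2) by ring, Real.exp_neg]
  exact inv_le_of_inv_le₀ (by linarith) (by
    rw [inv_le_iff_one_le_mul₀' (by linarith)]
    exact h)

lemma euler_aux (f : ℕ → ℤ)
    (hf1 : f 1 = 1)
    (hfmul : ∀ a b : ℕ, f (a * b) = f a * f b)
    (hfpm : ∀ n : ℕ, 1 ≤ n → f n = 1 ∨ f n = -1) {s : ℝ} (hs : 1 < s) :
    (Summable fun n : ℕ => (ArithmeticFunction.moebius n * f n : ℝ) * (n : ℝ) ^ (-s)) ∧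
    Tendsto (fun N : ℕ => ∏ p ∈ Nat.primesBelow N, (1 - (f p : ℝ) * (p : ℝ) ^ (-s))) atTop
      (nhds (∑' n : ℕ, (ArithmeticFunction.moebius n * f n : ℝ) * (n : ℝ) ^ (-s))) := by
  have hsum : Summable (fun n : ℕ => ‖(ArithmeticFunction.moebius n * f n : ℝ) * (n : ℝ) ^ (-s)‖) := by
    refine Summable.of_nonneg_of_le (fun _ => norm_nonneg _) (fun n => ?_)
      (Real.summable_nat_rpow.mpr (show -s < -1 by linarith))
    rcases Nat.eq_zero_or_pos n with rfl | hn
    · simp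
      positivity
    · have h1 : |(ArithmeticFunction.moebius n : ℝ)| ≤ 1 := by
        exact_mod_cast ArithmeticFunction.abs_moebius_le_one
      have h2 : |(f n : ℝ)| = 1 := by rcases hfpm n hn with h | h <;> simp [h]
      rw [Real.norm_eq_abs, abs_mul, abs_mul, h2, mul_one,
        abs_of_nonneg (by positivity : 0 ≤ (n : ℝ) ^ (-s))]
      exact mul_le_of_le_one_left (by positivity) h1
  refine ⟨hsum.of_norm, ?_⟩
  have := EulerProduct.eulerProduct
    (f := fun n : ℕ => (ArithmeticFunction.moebius n * f n : ℝ) * (n : ℝ) ^ (-s))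
    (by simp [hf1]) (by
      intro m n hmn
      rw [ArithmeticFunction.isMultiplicative_moebius.map_mul_of_coprime hmn, hfmul]
      push_cast
      rw [Real.mul_rpow (by positivity) (by positivity)]
      ring) hsum (by simp)
  refine this.congr fun N => Finset.prod_congr rfl fun p hp => ?_
  have hp := Nat.prime_of_mem_primesBelow hp
  rw [tsum_eq_sum (s := Finset.range 2)]
  · simp [Finset.sum_range_succ, hf1, ArithmeticFunction.moebius_apply_prime hp]
    ring
  · intro e he
    have he : 2 ≤ e := by simpa [Nat.succ_le_iff] using he
    rw [ArithmeticFunction.moebius_apply_prime_pow hp (by omega)]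
    rw [if_neg (by omega)]
    simp

/-- If `f` is completely multiplicative with values in `{-1, 1}`, `c ∈ [-1, 0)`, and
`∑_{p ≤ x} f p = c·(x/log x)·(1 + o(1))`, then the partial sums of `μ·f` are unbounded. -/
theorem stmt_10 (f : ℕ → ℤ)
    (hf1 : f 1 = 1)
    (hfmul : ∀ a b : ℕ, f (a * b) = f a * f b)
    (hfpm : ∀ n : ℕ, 1 ≤ n → f n = 1 ∨ f n = -1)
    (c : ℝ) (hc : c ∈ Set.Ico (-1 : ℝ) 0)
    (hasymp : (fun x : ℝ => (∑ p ∈ Nat.primesBelow (⌊x⌋₊ + 1), (f p : ℝ))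
        - c * (x / Real.log x)) =o[atTop] (fun x : ℝ => x / Real.log x)) :
    ∀ C : ℝ, ∃ N : ℕ,
      C < |((∑ n ∈ Finset.Icc 1 N, ArithmeticFunction.moebius n * f n : ℤ) : ℝ)| := by
  intro C
  by_contra hC
  push Not at hC
  have hC0 : 0 ≤ C := (abs_nonneg _).trans (hC 0)
  -- bounded Dirichlet series
  have hG : ∀ s : ℝ, 1 < s →
      ∑' n : ℕ, (ArithmeticFunction.moebius n * f n : ℝ) * (n : ℝ) ^ (-s) ≤ C := by
    intro s hs
    refine le_of_tendsto (euler_aux f hf1 hfmul hfpm hs).1.hasSum.tendsto_sum_nat ?_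
    filter_upwards [eventually_ge_atTop 1] with N hN
    have hA : ∀ k : ℕ, |∑ j ∈ Finset.range (k + 1), (ArithmeticFunction.moebius j * f j : ℝ)| ≤ C := by
      intro k
      have h := hC k
      push_cast at h
      rw [Finset.range_eq_Ico, Finset.sum_eq_sum_Ico_succ_bot (by omega)]
      simp only [ArithmeticFunction.map_zero, Int.cast_zero, zero_mul, zero_add]
      exact h
    obtain ⟨N, rfl⟩ := Nat.exists_eq_add_of_le' hN
    rw [abel_aux (fun n => (ArithmeticFunction.moebius n * f n : ℝ)) (fun n : ℕ => (n : ℝ) ^ (-s))]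
    rw [Finset.sum_range_succ' (fun k : ℕ => (∑ j ∈ Finset.range (k + 1),
        (ArithmeticFunction.moebius j * f j : ℝ)) *
          ((k : ℝ) ^ (-s) - ((k + 1 : ℕ) : ℝ) ^ (-s))) N]
    have h1 : ∑ k ∈ Finset.range N, (∑ j ∈ Finset.range (k + 1 + 1),
        (ArithmeticFunction.moebius j * f j : ℝ)) *
          (((k + 1 : ℕ) : ℝ) ^ (-s) - ((k + 1 + 1 : ℕ) : ℝ) ^ (-s)) ≤
        ∑ k ∈ Finset.range N, C *
          (((k + 1 : ℕ) : ℝ) ^ (-s) - ((k + 1 + 1 : ℕ) : ℝ) ^ (-s)) := by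
      refine Finset.sum_le_sum fun k _ => ?_
      exact mul_le_mul_of_nonneg_right ((le_abs_self _).trans (hA _))
        (sub_nonneg.mpr (w_anti hs.le (by omega)))
    rw [← Finset.mul_sum, Finset.sum_range_sub' (fun k : ℕ => ((k + 1 : ℕ) : ℝ) ^ (-s))] at h1
    have h2 : (∑ j ∈ Finset.range (N + 1), (ArithmeticFunction.moebius j * f j : ℝ)) *
        ((N + 1 : ℕ) : ℝ) ^ (-s) ≤ C * ((N + 1 : ℕ) : ℝ) ^ (-s) :=
      mul_le_mul_of_nonneg_right ((le_abs_self _).trans (hA _)) (by positivity)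
    simp only [zero_add, Nat.cast_one, Real.one_rpow] at h1
    simp only [zero_add, Finset.sum_range_one, ArithmeticFunction.map_zero, Int.cast_zero,
      zero_mul, add_zero]
    linarith
  -- the prime sums
  set b : ℕ → ℝ := fun n => if n.Prime then -(f n : ℝ) else 0 with hb
  have hbsum : ∀ (N : ℕ) (w : ℕ → ℝ), ∑ k ∈ Finset.range N, b k * w k =
      ∑ p ∈ Nat.primesBelow N, -((f p : ℝ) * w p) := by
    intro N w
    rw [Nat.primesBelow, Finset.sum_filter]
    refine Finset.sum_congr rfl fun k _ => ?_
    simp only [hb]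
    split_ifs <;> ring
  set B : ℕ → ℝ := fun k => ∑ j ∈ Finset.range (k + 1), b j with hBdef
  have hB : ∃ K : ℕ, 3 ≤ K ∧ ∀ k : ℕ, K ≤ k → (-c / 2) * (k / Real.log k) ≤ B k := by
    have h1 := (hasymp.def (show (0 : ℝ) < -c / 2 by linarith [hc.2]))
    have h2 := tendsto_natCast_atTop_atTop (R := ℝ) |>.eventually h1
    obtain ⟨K, hK⟩ := eventually_atTop.mp h2
    refine ⟨max K 3, le_max_right _ _, fun k hk => ?_⟩
    have h3 := hK k (le_trans (le_max_left _ _) hk)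
    have hk3 : (3 : ℝ) ≤ k := by exact_mod_cast le_trans (le_max_right _ _) hk
    have hl : 0 < Real.log k := Real.log_pos (by linarith)
    rw [Nat.floor_natCast, Real.norm_eq_abs, Real.norm_eq_abs,
      abs_of_nonneg (by positivity : 0 ≤ (k : ℝ) / Real.log k)] at h3
    have h4 : B k = -∑ p ∈ Nat.primesBelow (k + 1), (f p : ℝ) := by
      have := hbsum (k + 1) (fun _ => 1)
      simpa [hBdef] using this
    have h5 := (abs_le.mp h3).2
    rw [h4]
    linarith
  obtain ⟨K, hK3, hK⟩ := hB
  have hBnn : ∀ k, K ≤ k → 0 ≤ B k := by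
    intro k hk
    have hk3 : (3 : ℝ) ≤ k := by exact_mod_cast hK3.trans hk
    have hl : 0 < Real.log k := Real.log_pos (by linarith)
    refine le_trans ?_ (hK k hk)
    have := hc.2
    exact mul_nonneg (by linarith) (by positivity)
  set Z : ℝ := ∑' n : ℕ, (n : ℝ) ^ (-2 : ℝ) with hZ
  have hZs : Summable (fun n : ℕ => (n : ℝ) ^ (-2 : ℝ)) := Real.summable_nat_rpow.mpr (by norm_num)
  have key : ∀ s : ℝ, 1 < s → ∀ M : ℕ, K ≤ M →
      Real.exp ((∑ k ∈ Finset.range M, B k * ((k : ℝ) ^ (-s) - ((k + 1 : ℕ) : ℝ) ^ (-s))) - Z)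
        ≤ C := by
    intro s hs M hM
    refine le_trans ?_ (hG s hs)
    refine ge_of_tendsto (euler_aux f hf1 hfmul hfpm hs).2 ?_
    filter_upwards [eventually_ge_atTop (M + 1)] with N hN
    have h1 : Real.exp (∑ p ∈ Nat.primesBelow N,
        (-((f p : ℝ) * (p : ℝ) ^ (-s)) - ((f p : ℝ) * (p : ℝ) ^ (-s)) ^ 2)) ≤
        ∏ p ∈ Nat.primesBelow N, (1 - (f p : ℝ) * (p : ℝ) ^ (-s)) := by
      rw [Real.exp_sum]
      refine Finset.prod_le_prod (fun _ _ => (Real.exp_pos _).le) fun p hp => ?_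
      have hp := Nat.prime_of_mem_primesBelow hp
      apply exp_le_one_sub
      have h2 : |(f p : ℝ)| = 1 := by rcases hfpm p hp.one_le with h | h <;> simp [h]
      have hp2 : (2 : ℝ) ≤ p := by exact_mod_cast hp.two_le
      rw [abs_mul, h2, one_mul, abs_of_nonneg (by positivity)]
      calc (p : ℝ) ^ (-s) ≤ (p : ℝ) ^ (-1 : ℝ) :=
            Real.rpow_le_rpow_of_exponent_le (by linarith) (by linarith)
        _ = 1 / (p : ℝ) := by rw [Real.rpow_neg_one, one_div]
        _ ≤ 1 / 2 := by gcongr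
    refine le_trans (Real.exp_le_exp.mpr ?_) h1
    rw [Finset.sum_sub_distrib]
    refine sub_le_sub ?_ ?_
    · rw [← hbsum N (fun n => (n : ℝ) ^ (-s)), abel_aux b]
      obtain ⟨N, rfl⟩ := Nat.exists_eq_add_of_le' (show 1 ≤ N by omega)
      have h3 : 0 ≤ (∑ j ∈ Finset.range (N + 1), b j) * ((N + 1 : ℕ) : ℝ) ^ (-s) :=
        mul_nonneg (hBnn N (by omega)) (by positivity)
      refine le_trans ?_ (le_add_of_nonneg_left h3)
      refine Finset.sum_le_sum_of_subset_of_nonneg (Finset.range_mono (by omega)) ?_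
      intro k _ hk
      have hk : M ≤ k := by simpa using hk
      exact mul_nonneg (hBnn k (by omega)) (sub_nonneg.mpr (w_anti hs.le (by omega)))
    · refine le_trans (Finset.sum_le_sum fun p hp => ?_)
        (hZs.sum_le_tsum (Nat.primesBelow N) (fun _ _ => by positivity))
      have hp := Nat.prime_of_mem_primesBelow hp
      have h2 : (f p : ℝ) ^ 2 = 1 := by rcases hfpm p hp.one_le with h | h <;> simp [h]
      have hp2 : (1 : ℝ) ≤ p := by exact_mod_cast hp.one_le
      rw [mul_pow, h2, one_mul, ← Real.rpow_natCast, ← Real.rpow_mul (by positivity)]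
      exact Real.rpow_le_rpow_of_exponent_le hp2 (by push_cast; linarith)
  -- let `s → 1`
  have key1 : ∀ M : ℕ, K ≤ M →
      Real.exp ((∑ k ∈ Finset.range M,
        B k * ((k : ℝ) ^ (-1 : ℝ) - ((k + 1 : ℕ) : ℝ) ^ (-1 : ℝ))) - Z) ≤ C := by
    intro M hM
    have hcont : ∀ k : ℕ, ContinuousAt (fun s : ℝ => (k : ℝ) ^ (-s)) 1 := by
      intro k
      rcases Nat.eq_zero_or_pos k with rfl | hk
      · refine (continuousAt_const (y := (0 : ℝ))).congr ?_
        filter_upwards [lt_mem_nhds (show (0 : ℝ) < 1 by norm_num)] with s hs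
        rw [Nat.cast_zero, Real.zero_rpow (by linarith)]
      · have : (k : ℝ) ≠ 0 := by positivity
        exact (Real.continuousAt_const_rpow this).comp continuousAt_neg
    have hc1 : ContinuousAt (fun s : ℝ => Real.exp ((∑ k ∈ Finset.range M,
        B k * ((k : ℝ) ^ (-s) - ((k + 1 : ℕ) : ℝ) ^ (-s))) - Z)) 1 := by
      refine Real.continuous_exp.continuousAt.comp ?_
      refine ContinuousAt.sub ?_ continuousAt_const
      refine tendsto_finsetSum _ fun k _ => ?_
      exact continuousAt_const.mul ((hcont k).sub (hcont (k + 1)))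
    refine le_of_tendsto (hc1.tendsto.mono_left (nhdsWithin_le_nhds (s := Set.Ioi 1))) ?_
    filter_upwards [self_mem_nhdsWithin] with s hs
    exact key s hs M hM
  -- conclude
  set D : ℝ := ∑ k ∈ Finset.range K,
        B k * ((k : ℝ) ^ (-1 : ℝ) - ((k + 1 : ℕ) : ℝ) ^ (-1 : ℝ)) with hD
  have key2 : ∀ M : ℕ, K ≤ M → D + (-c / 2) *
      ((Real.log (Real.log M) - Real.log (Real.log K)) / 2) - Z ≤ C := by
    intro M hM
    refine le_trans ?_ (key1 M hM)
    refine le_trans ?_ ((le_add_of_nonneg_right zero_le_one).trans (Real.add_one_le_exp _))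
    rw [← Finset.sum_range_add_sum_Ico _ hM]
    have h1 : (-c / 2) * ((Real.log (Real.log M) - Real.log (Real.log K)) / 2) ≤
        ∑ k ∈ Finset.Ico K M, B k * ((k : ℝ) ^ (-1 : ℝ) - ((k + 1 : ℕ) : ℝ) ^ (-1 : ℝ)) := by
      refine (mul_le_mul_of_nonneg_left (loglog_aux K hK3 M hM) (by linarith [hc.2])).trans ?_
      rw [Finset.mul_sum]
      refine Finset.sum_le_sum fun k hk => ?_
      have hk := (Finset.mem_Ico.mp hk).1
      have hk3 : (3 : ℝ) ≤ k := by exact_mod_cast hK3.trans hk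
      have hl : 0 < Real.log k := Real.log_pos (by linarith)
      have h2 : (k : ℝ) ^ (-1 : ℝ) - ((k + 1 : ℕ) : ℝ) ^ (-1 : ℝ) = 1 / (k * ((k : ℝ) + 1)) := by
        rw [Real.rpow_neg_one, Real.rpow_neg_one]
        push_cast
        field_simp
        ring
      rw [h2]
      refine le_trans (le_of_eq ?_) (mul_le_mul_of_nonneg_right (hK k hk) (by positivity))
      field_simp
    linarith
  have htend : Tendsto (fun M : ℕ => D + (-c / 2) *
      ((Real.log (Real.log M) - Real.log (Real.log K)) / 2) - Z) atTop atTop := by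
    have h0 : Tendsto (fun M : ℕ => Real.log (Real.log M)) atTop atTop :=
      Real.tendsto_log_atTop.comp (Real.tendsto_log_atTop.comp tendsto_natCast_atTop_atTop)
    have h1 := (h0.const_mul_atTop (show 0 < -c / 4 by linarith [hc.2]))
    have h2 := tendsto_atTop_add_const_right _ (D - Z + c / 4 * Real.log (Real.log K)) h1
    refine h2.congr fun M => ?_
    ring
  obtain ⟨M, hM1, hM2⟩ := ((htend.eventually_gt_atTop C).and (eventually_ge_atTop K)).exists
  linarith [key2 M hM2]
end

section
/- Let f : ℕ → ℤ be a multiplicative function taking values in {-1, 1} such that f(2^k) = 1 for some integer k ≥ 1, and let c ∈ (0, 1] be a real number. Suppose ∑_{p ≤ x} f(p) = c·(x/log x)·(1 + o(1)) as x → ∞, the sum running over primes p. Then the partial sums of f are unbounded: lim sup_{N→∞} |∑_{n=1}^{N} f(n)| = ∞. -/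
open Filter Asymptotics

lemma abel_aux_s12 (d w : ℕ → ℝ) (K : ℝ) (hK : 0 ≤ K) (h0 : d 0 = 0)
    (hw : ∀ i, 1 ≤ i → w (i + 1) ≤ w i) (hw0 : ∀ i, 0 ≤ w i) (hw1 : w 1 ≤ 1)
    (hD : ∀ n, -K ≤ ∑ i ∈ Finset.range n, d i) (n : ℕ) :
    -K ≤ ∑ i ∈ Finset.range n, d i * w i := by
  have key : ∀ n, 1 ≤ n → w n * (∑ i ∈ Finset.range (n + 1), d i) - K * (w 1 - w n)
      ≤ ∑ i ∈ Finset.range (n + 1), d i * w i := by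
    intro n hn
    induction n, hn using Nat.le_induction with
    | base => simp [Finset.sum_range_succ, h0, mul_comm]
    | succ n hn ih =>
      rw [Finset.sum_range_succ, Finset.sum_range_succ _ (n + 1)]
      nlinarith [mul_nonneg (sub_nonneg.2 (hw n hn)) (by linarith [hD (n + 1)] :
        0 ≤ (∑ i ∈ Finset.range (n + 1), d i) + K)]
  rcases n with _ | n
  · simpa using hK
  rcases n with _ | n
  · simpa [h0] using hK
  · have h1 := key (n + 1) (by omega)
    nlinarith [mul_le_mul_of_nonneg_left (hD (n + 1 + 1)) (hw0 (n + 1)),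
      mul_le_mul_of_nonneg_left hw1 hK]

lemma rpow_antitone_aux (s : ℝ) (hs : 0 ≤ s) (i : ℕ) (hi : 1 ≤ i) :
    ((i + 1 : ℕ) : ℝ) ^ (-s) ≤ (i : ℝ) ^ (-s) := by
  apply Real.rpow_le_rpow_of_nonpos
  · exact_mod_cast hi
  · push_cast; linarith
  · linarith

/-- The elementary inequality for the local factors at odd primes. -/
lemma exp_aux (t u L : ℝ) (ht : t = u ∨ t = -u) (hu0 : 0 < u) (hu : u ≤ 1 / 3)
    (hL : 1 + t - u ^ 2 / (1 - u) ≤ L) : Real.exp (t - 6 * u ^ 2) ≤ L := by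
  have h1 : u ^ 2 / (1 - u) ≤ 3 / 2 * u ^ 2 := by
    rw [div_le_iff₀ (by linarith)]
    nlinarith [sq_nonneg u]
  set v := t - 3 / 2 * u ^ 2 with hv
  have htu : t ^ 2 = u ^ 2 := by rcases ht with h | h <;> rw [h] <;> ring
  have htb : -(1/3) ≤ t ∧ t ≤ 1 / 3 := by rcases ht with h | h <;> constructor <;> linarith
  have hv1 : 1 / 2 ≤ 1 + v := by nlinarith
  have hpos : 0 < 1 + v := by linarith
  have hlog := Real.one_sub_inv_le_log_of_pos hpos
  have h2 : t - 6 * u ^ 2 ≤ 1 - (1 + v)⁻¹ := by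
    have : 1 - (1 + v)⁻¹ = v - v ^ 2 / (1 + v) := by field_simp; ring
    rw [this]
    have h3 : v ^ 2 ≤ 9 / 4 * u ^ 2 := by
      have : v = t * (1 - 3 / 2 * t) := by rw [hv, ← htu]; ring
      rw [this, mul_pow, htu]
      have : (1 - 3 / 2 * t) ^ 2 ≤ 9 / 4 := by nlinarith
      nlinarith [sq_nonneg u]
    have h4 : v ^ 2 / (1 + v) ≤ 9 / 2 * u ^ 2 := by
      rw [div_le_iff₀ hpos]
      nlinarith [sq_nonneg u]
    linarith
  calc Real.exp (t - 6 * u ^ 2) ≤ Real.exp (Real.log (1 + v)) :=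
        Real.exp_le_exp.2 (h2.trans hlog)
    _ = 1 + v := Real.exp_log hpos
    _ ≤ L := by linarith

/-- Lower bounds for a power series with coefficients at least `-1`. -/
lemma series_aux (a : ℕ → ℝ) (ha : ∀ e, |a e| ≤ 1) (h0 : a 0 = 1) (u : ℝ) (hu0 : 0 < u)
    (hu : u ≤ 1 / 2) :
    1 + a 1 * u - u ^ 2 / (1 - u) ≤ ∑' e, a e * u ^ e ∧
    ∀ k, 1 ≤ k → a k = 1 → 2 * u ^ k ≤ ∑' e, a e * u ^ e := by
  have hg : Summable (fun e : ℕ => u ^ e) := summable_geometric_of_lt_one hu0.le (by linarith)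
  have hs : Summable (fun e => a e * u ^ e) := by
    refine Summable.of_norm_bounded hg fun e => ?_
    rw [norm_mul, Real.norm_eq_abs, Real.norm_of_nonneg (by positivity)]
    exact mul_le_of_le_one_left (by positivity) (ha e)
  have hadd : Summable (fun e => a e * u ^ e + u ^ e) := hs.add hg
  have hnn : ∀ e, 0 ≤ a e * u ^ e + u ^ e := by
    intro e
    have : 0 ≤ (a e + 1) * u ^ e := mul_nonneg (by linarith [(abs_le.1 (ha e)).1]) (by positivity)
    linarith
  have htot : ∑' e, (a e * u ^ e + u ^ e) = (∑' e, a e * u ^ e) + (1 - u)⁻¹ := by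
    rw [hs.tsum_add hg, tsum_geometric_of_lt_one hu0.le (by linarith)]
  have hne : 1 - u ≠ 0 := by linarith
  constructor
  · have := hadd.sum_le_tsum (Finset.range 2) (fun e _ => hnn e)
    rw [htot] at this
    simp only [Finset.sum_range_succ, Finset.sum_range_zero, h0, pow_zero, pow_one] at this
    have h3 : (1 - u)⁻¹ = 1 + u + u ^ 2 / (1 - u) := by field_simp; ring
    linarith
  · intro k hk hak
    have := hadd.sum_le_tsum {0, k} (fun e _ => hnn e)
    rw [htot, Finset.sum_pair (by omega)] at this
    simp only [h0, hak, pow_zero] at this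
    have h3 : (1 - u)⁻¹ ≤ 2 := by
      rw [inv_le_comm₀ (by linarith) (by norm_num)]; linarith
    linarith

/-- Uniform lower bound for finite Euler products. -/
lemma local_aux (f : ℕ → ℤ) (hf1 : f 1 = 1) (hfpm : ∀ n : ℕ, 1 ≤ n → f n = 1 ∨ f n = -1)
    (k : ℕ) (hk : 1 ≤ k) (hfk : f (2 ^ k) = 1) :
    ∃ A : ℝ, 0 ≤ A ∧ ∀ s : ℝ, 1 < s → s ≤ 2 → ∀ p : ℕ, p.Prime →
      Real.exp (f p * (p : ℝ) ^ (-s) - 6 * (1 / (p : ℝ) ^ 2) - if p = 2 then A else 0) ≤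
        ∑' e, (f (p ^ e) : ℝ) * ((p ^ e : ℕ) : ℝ) ^ (-s) := by
  have habs : ∀ n : ℕ, 1 ≤ n → |(f n : ℝ)| ≤ 1 := by
    intro n hn; rcases hfpm n hn with h | h <;> simp [h]
  set δ : ℝ := 2 * (1 / 4) ^ k with hδ
  have hδ0 : 0 < δ := by positivity
  refine ⟨|1 - Real.log δ|, abs_nonneg _, ?_⟩
  intro s hs1 hs2 p hp
  have hp0 : (0 : ℝ) < p := by exact_mod_cast hp.pos
  have hp1 : (1 : ℝ) ≤ p := by exact_mod_cast hp.one_le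
  have hp2 : (2 : ℝ) ≤ p := by exact_mod_cast hp.two_le
  set u : ℝ := (p : ℝ) ^ (-s) with hu
  have hu0 : 0 < u := Real.rpow_pos_of_pos hp0 _
  have hup : u ≤ 1 / p := by
    have := Real.rpow_le_rpow_of_exponent_le hp1 (by linarith : -s ≤ -1)
    rw [Real.rpow_neg_one] at this
    simpa using this
  have hul : 1 / (p : ℝ) ^ 2 ≤ u := by
    have := Real.rpow_le_rpow_of_exponent_le hp1 (by linarith : -2 ≤ -s)
    rw [Real.rpow_neg hp0.le] at this
    simpa using this
  have hu2 : u ^ 2 ≤ 1 / (p : ℝ) ^ 2 := by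
    have := pow_le_pow_left₀ hu0.le hup 2
    simpa using this
  have hser : ∀ e : ℕ, (f (p ^ e) : ℝ) * ((p ^ e : ℕ) : ℝ) ^ (-s) = (f (p ^ e) : ℝ) * u ^ e := by
    intro e
    rw [hu, ← Real.rpow_natCast, ← Real.rpow_mul hp0.le, mul_comm (-s), Real.rpow_mul hp0.le,
      Real.rpow_natCast]
    push_cast; rfl
  simp_rw [hser]
  have huh : u ≤ 1 / 2 := hup.trans (one_div_le_one_div_of_le (by norm_num) hp2)
  obtain ⟨hA, hB⟩ := series_aux (fun e => (f (p ^ e) : ℝ))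
    (fun e => habs _ (Nat.one_le_pow _ _ hp.pos)) (by simp [hf1]) u hu0 huh
  simp only [pow_one] at hA
  by_cases h2 : p = 2
  · subst h2
    simp only [if_true]
    have hB := hB k hk (by simp [hfk])
    refine le_trans ?_ hB
    have h4 : δ ≤ 2 * u ^ k := by
      rw [hδ]
      have : (1 / 4 : ℝ) ≤ u := by
        refine le_trans (le_of_eq ?_) hul; norm_num
      gcongr
    refine le_trans ?_ h4
    rw [← Real.le_log_iff_exp_le hδ0]
    have h5 : (f 2 : ℝ) * u ≤ 1 := by
      have := (abs_le.1 (habs 2 (by norm_num))).2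
      nlinarith
    have h6 := le_abs_self (1 - Real.log δ)
    have h7 : (0 : ℝ) ≤ 6 * (1 / ((2 : ℕ) : ℝ) ^ 2) := by positivity
    linarith
  · simp only [h2, if_false, sub_zero]
    have hp3 : (3 : ℝ) ≤ p := by
      have := hp.two_le
      exact_mod_cast (by omega : 3 ≤ p)
    have hu3 : u ≤ 1 / 3 := hup.trans (one_div_le_one_div_of_le (by norm_num) hp3)
    refine le_trans (Real.exp_le_exp.2 ?_) (exp_aux (f p * u) u _ ?_ hu0 hu3 hA)
    · linarith
    · rcases hfpm p hp.one_le with h | h <;> simp [h]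

/-- `∑_{p<n} (f p - ε)` is bounded below for some `ε > 0`. -/
lemma prime_sum_aux (f : ℕ → ℤ) (c : ℝ) (hc : 0 < c)
    (hasymp : (fun x : ℝ => (∑ p ∈ Nat.primesBelow (⌊x⌋₊ + 1), (f p : ℝ))
        - c * (x / Real.log x)) =o[atTop] (fun x : ℝ => x / Real.log x)) :
    ∃ ε : ℝ, 0 < ε ∧ ∃ K : ℝ, 0 ≤ K ∧ ∀ n : ℕ,
      -K ≤ ∑ p ∈ Nat.primesBelow n, ((f p : ℝ) - ε) := by
  have hch := Chebyshev.eventually_primeCounting_le (ε := 1) one_pos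
  have hb := hasymp.bound (half_pos hc)
  have hl4 : 0 < Real.log 4 := Real.log_pos (by norm_num)
  set B := Real.log 4 + 1 with hB
  have hB0 : 0 < B := by linarith
  refine ⟨c / 2 / B, by positivity, ?_⟩
  set ε := c / 2 / B with hε
  have hev : ∀ᶠ x : ℝ in atTop, 0 ≤ ∑ p ∈ Nat.primesBelow (⌊x⌋₊ + 1), ((f p : ℝ) - ε) := by
    filter_upwards [hch, hb, eventually_ge_atTop 2] with x h1 h2 h3
    have hq : 0 ≤ x / Real.log x := div_nonneg (by linarith) (Real.log_nonneg (by linarith))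
    rw [Real.norm_of_nonneg hq, Real.norm_eq_abs] at h2
    have h4 := (abs_le.1 h2).1
    rw [Finset.sum_sub_distrib, Finset.sum_const, Nat.primesBelow_card_eq_primeCounting',
      nsmul_eq_mul]
    have h5 : ((Nat.primeCounting' (⌊x⌋₊ + 1) : ℕ) : ℝ) ≤ B * (x / Real.log x) := by
      rw [← mul_div_assoc]; exact h1
    have h6 : ((Nat.primeCounting' (⌊x⌋₊ + 1) : ℕ) : ℝ) * ε ≤ c / 2 * (x / Real.log x) := by
      calc _ ≤ B * (x / Real.log x) * ε := by gcongr
        _ = _ := by rw [hε]; field_simp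
    linarith
  have hev' := tendsto_natCast_atTop_atTop.eventually hev
  obtain ⟨N, hN⟩ := eventually_atTop.1 hev'
  refine ⟨∑ n ∈ Finset.range (N + 1), |∑ p ∈ Nat.primesBelow n, ((f p : ℝ) - ε)|,
    Finset.sum_nonneg fun _ _ => abs_nonneg _, fun n => ?_⟩
  have hnn : 0 ≤ ∑ n ∈ Finset.range (N + 1), |∑ p ∈ Nat.primesBelow n, ((f p : ℝ) - ε)| :=
    Finset.sum_nonneg fun _ _ => abs_nonneg _
  rcases lt_or_ge n (N + 1) with h | h
  · have := Finset.single_le_sum (f := fun n => |∑ p ∈ Nat.primesBelow n, ((f p : ℝ) - ε)|)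
      (fun _ _ => abs_nonneg _) (Finset.mem_range.2 h)
    have h2 := neg_abs_le (∑ p ∈ Nat.primesBelow n, ((f p : ℝ) - ε))
    linarith
  · obtain ⟨m, rfl⟩ : ∃ m, n = m + 1 := ⟨n - 1, by omega⟩
    have := hN m (by omega)
    rw [Nat.floor_natCast] at this
    linarith

/-- If `f` is multiplicative with values in `{-1, 1}`, `f (2^k) = 1` for some `k ≥ 1`,
`c ∈ (0, 1]`, and `∑_{p ≤ x} f p = c·(x/log x)·(1 + o(1))`, then the partial sums of
`f` are unbounded. -/
theorem stmt_12 (f : ℕ → ℤ)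
    (hf1 : f 1 = 1)
    (hfmul : ∀ a b : ℕ, Nat.Coprime a b → f (a * b) = f a * f b)
    (hfpm : ∀ n : ℕ, 1 ≤ n → f n = 1 ∨ f n = -1)
    (hf2 : ∃ k : ℕ, 1 ≤ k ∧ f (2 ^ k) = 1)
    (c : ℝ) (hc : c ∈ Set.Ioc (0 : ℝ) 1)
    (hasymp : (fun x : ℝ => (∑ p ∈ Nat.primesBelow (⌊x⌋₊ + 1), (f p : ℝ))
        - c * (x / Real.log x)) =o[atTop] (fun x : ℝ => x / Real.log x)) :
    ∀ C : ℝ, ∃ N : ℕ, C < |((∑ n ∈ Finset.Icc 1 N, f n : ℤ) : ℝ)| := by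
  by_contra! hcon
  obtain ⟨C, hC⟩ := hcon
  have hC0 : 0 ≤ C := (abs_nonneg _).trans (hC 0)
  obtain ⟨k, hk, hfk⟩ := hf2
  obtain ⟨A, hA0, hA⟩ := local_aux f hf1 hfpm k hk hfk
  obtain ⟨ε, hε, K, hK0, hK⟩ := prime_sum_aux f c hc.1 hasymp
  have hS2 : Summable (fun n : ℕ => 1 / (n : ℝ) ^ 2) := Real.summable_one_div_nat_pow.2 (by norm_num)
  set S := ∑' n : ℕ, 1 / (n : ℝ) ^ 2 with hS
  have main : ∀ s : ℝ, 1 < s → s ≤ 2 → ∀ m : ℕ,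
      Real.exp (ε * ∑ p ∈ Nat.primesBelow m, (p : ℝ) ^ (-s) - K - 6 * S - A) ≤ C := by
    intro s hs1 hs2 m
    set w : ℕ → ℝ := fun n => (n : ℝ) ^ (-s) with hw
    have hw0 : ∀ i, 0 ≤ w i := fun i => Real.rpow_nonneg (Nat.cast_nonneg _) _
    have hw1 : w 1 ≤ 1 := by simp [hw]
    have hwz : w 0 = 0 := by
      simp only [hw, Nat.cast_zero]; exact Real.zero_rpow (by linarith)
    have hwa : ∀ i, 1 ≤ i → w (i + 1) ≤ w i := rpow_antitone_aux s (by linarith)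
    have hsw : Summable w := Real.summable_nat_rpow.2 (by linarith)
    set g : ℕ → ℝ := fun n => (f n : ℝ) * w n with hg
    have hgs : Summable (fun n => ‖g n‖) := by
      refine Summable.of_nonneg_of_le (fun _ => norm_nonneg _) (fun n => ?_) hsw
      rcases Nat.eq_zero_or_pos n with h | h
      · simp [hg, h, hwz]
      · rw [hg]
        simp only [norm_mul, Real.norm_of_nonneg (hw0 n)]
        rcases hfpm n h with h | h <;> simp [h]
    have hgs' : Summable g := hgs.of_norm
    -- upper bound
    have hupper : ∑' n, g n ≤ C := by
      refine hgs'.tsum_le_of_sum_range_le ?_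
      intro n
      have := abel_aux_s12 (fun i => if i = 0 then 0 else -(f i : ℝ)) w C hC0 (by simp) hwa hw0 hw1
        (by
          intro n
          rcases n with _ | n
          · simpa using hC0
          have h1 := (abs_le.1 (hC n)).2
          have h2 : ∑ i ∈ Finset.range (n + 1), (if i = 0 then 0 else -(f i : ℝ))
              = - ((∑ n ∈ Finset.Icc 1 n, f n : ℤ) : ℝ) := by
            clear h1
            induction n with
            | zero => simp
            | succ n ih =>
              rw [Finset.sum_range_succ, ih, Finset.sum_Icc_succ_top (by omega)]
              push_cast
              ring
          rw [h2]; linarith) n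
      have h3 : ∑ i ∈ Finset.range n, (if i = 0 then 0 else -(f i : ℝ)) * w i
          = - ∑ i ∈ Finset.range n, g i := by
        rw [← Finset.sum_neg_distrib]
        refine Finset.sum_congr rfl fun i _ => ?_
        by_cases h : i = 0
        · simp [h, hg, hwz]
        · simp [h, hg]
      linarith
    -- Euler product
    have heuler := EulerProduct.eulerProduct (f := g) (by simp [hg, hw, hf1])
      (by
        intro a b hab
        simp only [hg, hw, hfmul a b hab]
        push_cast
        rw [Real.mul_rpow (Nat.cast_nonneg _) (Nat.cast_nonneg _)]
        ring) hgs (by simp [hg, hwz])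
    refine le_trans (ge_of_tendsto heuler ?_) hupper
    filter_upwards [eventually_ge_atTop m] with n hn
    have hprod : ∏ p ∈ Nat.primesBelow n, Real.exp (f p * (p : ℝ) ^ (-s) - 6 * (1 / (p : ℝ) ^ 2)
        - if p = 2 then A else 0) ≤ ∏ p ∈ Nat.primesBelow n, ∑' e, g (p ^ e) := by
      refine Finset.prod_le_prod (fun _ _ => (Real.exp_pos _).le) fun p hp => ?_
      exact hA s hs1 hs2 p (Nat.prime_of_mem_primesBelow hp)
    refine le_trans ?_ hprod
    rw [← Real.exp_sum, Real.exp_le_exp, Finset.sum_sub_distrib, Finset.sum_sub_distrib,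
      ← Finset.mul_sum]
    have e1 : ∑ p ∈ Nat.primesBelow n, 1 / (p : ℝ) ^ 2 ≤ S :=
      hS2.sum_le_tsum _ (fun _ _ => by positivity)
    have e2 : ∑ p ∈ Nat.primesBelow n, (if p = 2 then A else 0) ≤ A := by
      rw [Finset.sum_ite_eq']
      split_ifs <;> linarith
    have e3 : ∑ p ∈ Nat.primesBelow m, (p : ℝ) ^ (-s) ≤ ∑ p ∈ Nat.primesBelow n, (p : ℝ) ^ (-s) := by
      refine Finset.sum_le_sum_of_subset_of_nonneg ?_ (fun i _ _ => hw0 i)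
      intro p hp
      rw [Nat.mem_primesBelow] at hp ⊢
      exact ⟨by omega, hp.2⟩
    have e4 : -K ≤ ∑ p ∈ Nat.primesBelow n, ((f p : ℝ) - ε) * (p : ℝ) ^ (-s) := by
      have := abel_aux_s12 (fun i => if i.Prime then (f i : ℝ) - ε else 0) w K hK0
        (by simp [Nat.not_prime_zero]) hwa hw0 hw1
        (by
          intro n
          have := hK n
          rwa [Nat.primesBelow, Finset.sum_filter] at this) n
      rw [Nat.primesBelow, Finset.sum_filter]
      simpa only [ite_mul, zero_mul] using this
    have e5 : ∑ p ∈ Nat.primesBelow n, ((f p : ℝ) - ε) * (p : ℝ) ^ (-s) =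
        ∑ p ∈ Nat.primesBelow n, (f p : ℝ) * (p : ℝ) ^ (-s)
          - ε * ∑ p ∈ Nat.primesBelow n, (p : ℝ) ^ (-s) := by
      rw [Finset.mul_sum, ← Finset.sum_sub_distrib]
      exact Finset.sum_congr rfl fun _ _ => by ring
    have e6 := mul_le_mul_of_nonneg_left e3 hε.le
    linarith
  have hbound : ∀ m : ℕ, Real.exp (ε * ∑ p ∈ Nat.primesBelow m, (p : ℝ) ^ (-1 : ℝ) - K - 6 * S - A)
      ≤ C := by
    intro m
    have hcont : Tendsto (fun s : ℝ =>
        Real.exp (ε * ∑ p ∈ Nat.primesBelow m, (p : ℝ) ^ (-s) - K - 6 * S - A))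
        (nhdsWithin 1 (Set.Ioi 1))
        (nhds (Real.exp (ε * ∑ p ∈ Nat.primesBelow m, (p : ℝ) ^ (-1 : ℝ) - K - 6 * S - A))) := by
      refine Tendsto.mono_left ?_ nhdsWithin_le_nhds
      refine (Real.continuous_exp.tendsto _).comp ?_
      refine Tendsto.sub_const (Tendsto.sub_const (Tendsto.sub_const
        (Tendsto.const_mul _ (tendsto_finsetSum _ fun p hp => ?_)) _) _) _
      have hp0 : (p : ℝ) ≠ 0 := by
        exact_mod_cast (Nat.prime_of_mem_primesBelow hp).ne_zero
      exact ((Real.continuousAt_const_rpow hp0).tendsto).comp (tendsto_id.neg)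
    refine le_of_tendsto hcont ?_
    filter_upwards [Ioc_mem_nhdsGT (show (1 : ℝ) < 2 by norm_num)] with s hs
    exact main s hs.1 hs.2 m
  have hCpos : 0 < C := (Real.exp_pos _).trans_le (hbound 0)
  apply not_summable_one_div_on_primes
  refine summable_of_sum_range_le (c := (Real.log C + K + 6 * S + A) / ε) ?_ fun m => ?_
  · intro n
    exact Set.indicator_nonneg (fun _ _ => by positivity) _
  · have h1 := (Real.le_log_iff_exp_le hCpos).2 (hbound m)
    have h2 : ∑ p ∈ Nat.primesBelow m, (p : ℝ) ^ (-1 : ℝ)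
        = ∑ i ∈ Finset.range m, Set.indicator {p : ℕ | p.Prime} (fun n : ℕ => (1 : ℝ) / n) i := by
      rw [Nat.primesBelow, Finset.sum_filter]
      refine Finset.sum_congr rfl fun i _ => ?_
      by_cases h : i.Prime <;> simp [Set.indicator, h, Real.rpow_neg_one]
    rw [← h2, le_div_iff₀ hε]
    linarith
end

section
/- Let f : ℕ → ℤ be a multiplicative function taking values in {-1, 1} such that f(2^k) = 1 for some integer k ≥ 1. Then there exists σ₀ ∈ (0, 1) such that: (i) for every real σ > σ₀ the infinite product Π(σ) = ∏_p (1 + ∑_{k ≥ 2} (f(p^k) - f(p^{k-1}) f(p))/p^{kσ}) over primes p converges absolutely and each factor is strictly positive (so Π(σ) > 0); and (ii) for every real σ > 1, ∑_{n ≥ 1} f(n)/n^σ = Π(σ) · ∏_p (1 - f(p)/p^σ)^{-1}. -/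
/-- The `p`-th factor `1 + ∑_{k ≥ 2} (f (p^k) - f (p^(k-1)) f p) / p^(kσ)` of the
product `Π(σ)`. -/
noncomputable def piFactor (f : ℕ → ℤ) (p : ℕ) (σ : ℝ) : ℝ :=
  1 + ∑' k : ℕ, ((f (p ^ (k + 2)) : ℝ) - (f (p ^ (k + 1)) : ℝ) * (f p : ℝ))
      / (p : ℝ) ^ (((k : ℝ) + 2) * σ)

lemma aux_summable (a : ℕ → ℝ) (x : ℝ) (ha : ∀ k, |a k| ≤ 1) (hx0 : 0 < x) (hx1 : x < 1) :
    Summable (fun k => a k * x ^ k) := by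
  refine Summable.of_norm_bounded (summable_geometric_of_lt_one hx0.le hx1) (fun k => ?_)
  rw [Real.norm_eq_abs, abs_mul, abs_of_pos (pow_pos hx0 k)]
  exact mul_le_of_le_one_left (pow_pos hx0 k).le (ha k)

lemma aux_eq (a : ℕ → ℝ) (x : ℝ) (ha0 : a 0 = 1) (ha : ∀ k, |a k| ≤ 1)
    (hx0 : 0 < x) (hx1 : x < 1) :
    1 + ∑' k, (a (k + 2) - a (k + 1) * a 1) * x ^ (k + 2) =
      (1 - a 1 * x) * ∑' k, a k * x ^ k := by
  have hs := aux_summable a x ha hx0 hx1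
  have hs1 := (summable_nat_add_iff 1).2 hs
  have hs2 := (summable_nat_add_iff 2).2 hs
  have e1 := hs.tsum_eq_zero_add
  have e2 := hs1.tsum_eq_zero_add
  have e3 : ∑' k, (a (k + 2) - a (k + 1) * a 1) * x ^ (k + 2) =
      ∑' k, a (k + 2) * x ^ (k + 2) - a 1 * x * ∑' k, a (k + 1) * x ^ (k + 1) := by
    rw [← tsum_mul_left, ← hs2.tsum_sub (hs1.mul_left _)]
    congr 1; ext k; ring
  rw [e3, e1]
  simp only [ha0, pow_zero, mul_one, zero_add, pow_one, add_assoc] at e2 ⊢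
  norm_num at e2 ⊢
  rw [e2]; ring

lemma aux_bound (a : ℕ → ℝ) (x : ℝ) (ha : ∀ k, |a k| ≤ 1)
    (hx0 : 0 < x) (hx1 : x < 1) :
    |∑' k, (a (k + 2) - a (k + 1) * a 1) * x ^ (k + 2)| ≤ 2 * x ^ 2 * (1 - x)⁻¹ := by
  rw [← Real.norm_eq_abs]
  refine tsum_of_norm_bounded ((hasSum_geometric_of_lt_one hx0.le hx1).mul_left (2 * x ^ 2)) ?_
  intro k
  rw [Real.norm_eq_abs, abs_mul, abs_of_pos (pow_pos hx0 _)]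
  have h1 : |a (k + 2) - a (k + 1) * a 1| ≤ 2 := by
    have h2 := abs_sub (a (k+2)) (a (k+1) * a 1)
    have h3 : |a (k + 1) * a 1| ≤ 1 := by
      rw [abs_mul]; exact mul_le_one₀ (ha _) (abs_nonneg _) (ha _)
    have := ha (k+2)
    linarith
  calc _ ≤ 2 * x ^ (k+2) := by gcongr
    _ = _ := by ring

lemma aux_lower_s14 (a : ℕ → ℝ) (x : ℝ) (ha0 : a 0 = 1) (ha : ∀ k, |a k| ≤ 1)
    (hx0 : 0 < x) (hx1 : x < 1) (s : Finset ℕ) :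
    ∑ k ∈ s, (a k + 1) * x ^ k ≤ ∑' k, a k * x ^ k + (1 - x)⁻¹ := by
  have hs := aux_summable a x ha hx0 hx1
  have hg := summable_geometric_of_lt_one hx0.le hx1
  rw [← tsum_geometric_of_lt_one hx0.le hx1, ← hs.tsum_add hg]
  have : ∀ k, a k * x ^ k + x ^ k = (a k + 1) * x ^ k := fun k => by ring
  have h2 := hs.add hg
  simp only [this] at h2 ⊢
  refine h2.sum_le_tsum s (fun k _ => ?_)
  have := (abs_le.1 (ha k)).1
  have := pow_pos hx0 k
  apply mul_nonneg <;> linarith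

lemma aux_pos1 (a : ℕ → ℝ) (x : ℝ) (ha0 : a 0 = 1) (ha : ∀ k, |a k| ≤ 1)
    (hx0 : 0 < x) (hx1 : x < 1 / 2) : 0 < ∑' k, a k * x ^ k := by
  have h := aux_lower_s14 a x ha0 ha hx0 (by linarith) {0}
  simp [ha0] at h
  have : (1 - x)⁻¹ < 2 := by
    rw [inv_lt_comm₀ (by linarith) (by norm_num)]; linarith
  linarith

lemma aux_pos2 (a : ℕ → ℝ) (x : ℝ) (ha0 : a 0 = 1) (ha : ∀ k, |a k| ≤ 1)
    (m : ℕ) (hm : 1 ≤ m) (ham : a m = 1)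
    (hx0 : 0 < x) (hx1 : x < 1 / 2 + (1 / 2) ^ m / 8) : 0 < ∑' k, a k * x ^ k := by
  rcases lt_or_ge x (1 / 2) with hx | hx
  · exact aux_pos1 a x ha0 ha hx0 hx
  have hp : (0:ℝ) < (1/2)^m := by positivity
  have hp1 : ((1:ℝ)/2)^m ≤ 1/2 := by
    calc ((1:ℝ)/2)^m ≤ (1/2)^1 := pow_le_pow_of_le_one (by norm_num) (by norm_num) hm
      _ = _ := by norm_num
  have hx9 : x < 9/16 := by linarith
  have h := aux_lower_s14 a x ha0 ha hx0 (by linarith) {0, m}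
  rw [Finset.sum_pair (by omega), ha0, ham] at h
  have hxm : ((1:ℝ)/2)^m ≤ x ^ m := by gcongr
  have : (1 - x)⁻¹ < 2 + 2 * (1/2)^m := by
    rw [inv_lt_iff_one_lt_mul₀ (by linarith)]
    nlinarith
  norm_num at h this hxm
  linarith

lemma exists_sigma (m : ℕ) : ∃ s : ℝ, 1 / 2 < s ∧ s < 1 ∧
    (3:ℝ) ^ (-s) < 1 / 2 ∧ (2:ℝ) ^ (-s) < 1 / 2 + (1 / 2) ^ m / 8 := by
  have h3 : Filter.Tendsto (fun s : ℝ => (3:ℝ) ^ (-s)) (nhdsWithin 1 (Set.Iio 1)) (nhds (3 ^ (-1:ℝ))) := by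
    apply Filter.Tendsto.mono_left _ nhdsWithin_le_nhds
    have : Continuous (fun s : ℝ => (3:ℝ) ^ (-s)) := by
      exact Continuous.rpow continuous_const continuous_neg (fun _ => Or.inl (by norm_num))
    exact this.tendsto 1
  have h2 : Filter.Tendsto (fun s : ℝ => (2:ℝ) ^ (-s)) (nhdsWithin 1 (Set.Iio 1)) (nhds (2 ^ (-1:ℝ))) := by
    apply Filter.Tendsto.mono_left _ nhdsWithin_le_nhds
    have : Continuous (fun s : ℝ => (2:ℝ) ^ (-s)) := by
      exact Continuous.rpow continuous_const continuous_neg (fun _ => Or.inl (by norm_num))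
    exact this.tendsto 1
  have hp : (0:ℝ) < (1/2)^m := by positivity
  rw [Real.rpow_neg_one] at h2 h3
  have e3 := h3.eventually_lt_const (u := 1/2) (by norm_num)
  have e2 := h2.eventually_lt_const (u := 1 / 2 + (1 / 2) ^ m / 8) (by linarith)
  have e1 : ∀ᶠ s : ℝ in nhdsWithin 1 (Set.Iio 1), s ∈ Set.Ioo (1/2) 1 :=
    Ioo_mem_nhdsLT (by norm_num)
  obtain ⟨s, hs⟩ := (e1.and (e3.and e2)).exists
  exact ⟨s, hs.1.1, hs.1.2, hs.2⟩

lemma piFactor_form (f : ℕ → ℤ) (p : ℕ) (hp : 0 < p) (σ : ℝ) :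
    piFactor f p σ = 1 + ∑' k : ℕ, (((f (p ^ (k + 2)) : ℤ) : ℝ) - (f (p ^ (k + 1)) : ℝ) * (f (p ^ 1) : ℝ))
      * ((p : ℝ) ^ (-σ)) ^ (k + 2) := by
  unfold piFactor
  congr 2; ext k
  rw [pow_one, div_eq_mul_inv, ← Real.rpow_neg (by positivity), ← Real.rpow_natCast, ← Real.rpow_mul (by positivity)]
  congr 2; push_cast; ring

lemma abs_le_one_of (f : ℕ → ℤ) (hfpm : ∀ n : ℕ, 1 ≤ n → f n = 1 ∨ f n = -1) (n : ℕ) (hn : 1 ≤ n) :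
    |(f n : ℝ)| ≤ 1 := by
  rcases hfpm n hn with h | h <;> simp [h]

lemma prime_x (p : Nat.Primes) {σ : ℝ} (hσ : 0 < σ) :
    0 < ((p : ℕ) : ℝ) ^ (-σ) ∧ ((p : ℕ) : ℝ) ^ (-σ) ≤ (2:ℝ) ^ (-σ) ∧ (2:ℝ) ^ (-σ) < 1 := by
  have h2 : (2:ℝ) ≤ (p : ℕ) := by exact_mod_cast p.2.two_le
  exact ⟨by have := p.2.pos; positivity,
    Real.rpow_le_rpow_of_nonpos (by norm_num) h2 (by linarith),
    Real.rpow_lt_one_of_one_lt_of_neg (by norm_num) (by linarith)⟩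

theorem stmt_14 (f : ℕ → ℤ)
    (hf1 : f 1 = 1)
    (hfmul : ∀ a b : ℕ, Nat.Coprime a b → f (a * b) = f a * f b)
    (hfpm : ∀ n : ℕ, 1 ≤ n → f n = 1 ∨ f n = -1)
    (hf2 : ∃ k : ℕ, 1 ≤ k ∧ f (2 ^ k) = 1) :
    ∃ σ₀ ∈ Set.Ioo (0 : ℝ) 1,
      (∀ σ : ℝ, σ₀ < σ →
        Summable (fun p : Nat.Primes => |piFactor f (p : ℕ) σ - 1|) ∧
        Multipliable (fun p : Nat.Primes => piFactor f (p : ℕ) σ) ∧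
        (∀ p : Nat.Primes, 0 < piFactor f (p : ℕ) σ) ∧
        0 < ∏' p : Nat.Primes, piFactor f (p : ℕ) σ) ∧
      (∀ σ : ℝ, 1 < σ →
        (∑' n : ℕ, (f (n + 1) : ℝ) / ((n : ℝ) + 1) ^ σ) =
          (∏' p : Nat.Primes, piFactor f (p : ℕ) σ) *
            ∏' p : Nat.Primes, (1 - (f (p : ℕ) : ℝ) / (p : ℝ) ^ σ)⁻¹) := by
  obtain ⟨m, hm, hfm⟩ := hf2
  obtain ⟨s, hs0, hs1, hs3, hs2⟩ := exists_sigma m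
  have habs : ∀ p : Nat.Primes, ∀ k, |(fun k => (f ((p:ℕ) ^ k) : ℝ)) k| ≤ 1 := fun p k =>
    abs_le_one_of f hfpm _ (Nat.one_le_pow _ _ p.2.pos)
  have hz : ∀ p : Nat.Primes, (fun k => (f ((p:ℕ) ^ k) : ℝ)) 0 = 1 := fun p => by simp [hf1]
  have hfac : ∀ p : Nat.Primes, ∀ σ : ℝ, 0 < σ → piFactor f p σ =
      (1 - (f (p:ℕ) : ℝ) * ((p:ℕ):ℝ) ^ (-σ)) * ∑' k, (f ((p:ℕ) ^ k) : ℝ) * (((p:ℕ):ℝ) ^ (-σ)) ^ k := by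
    intro p σ hσ
    obtain ⟨h1, h2, h3⟩ := prime_x p hσ
    rw [piFactor_form f p p.2.pos σ]
    have := aux_eq (fun k => (f ((p:ℕ) ^ k) : ℝ)) _ (hz p) (habs p) h1 (h2.trans_lt h3)
    simp only [pow_one] at this ⊢
    exact this
  have hfx : ∀ p : Nat.Primes, ∀ σ : ℝ, 0 < σ →
      |(f (p:ℕ) : ℝ) * ((p:ℕ):ℝ) ^ (-σ)| ≤ ((p:ℕ):ℝ) ^ (-σ) := by
    intro p σ hσ
    obtain ⟨h1, h2, h3⟩ := prime_x p hσ
    rw [abs_mul, abs_of_pos h1]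
    exact mul_le_of_le_one_left h1.le (abs_le_one_of f hfpm _ p.2.pos)
  have hpart1 : ∀ σ : ℝ, s < σ →
        Summable (fun p : Nat.Primes => |piFactor f (p : ℕ) σ - 1|) ∧
        Multipliable (fun p : Nat.Primes => piFactor f (p : ℕ) σ) ∧
        (∀ p : Nat.Primes, 0 < piFactor f (p : ℕ) σ) ∧
        0 < ∏' p : Nat.Primes, piFactor f (p : ℕ) σ := by
    intro σ hσ
    have hσ0 : 0 < σ := by linarith
    have hsum : Summable (fun p : Nat.Primes => |piFactor f (p : ℕ) σ - 1|) := by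
      have hb : Summable (fun p : Nat.Primes => (2 * (1 - (2:ℝ) ^ (-σ))⁻¹) * ((p:ℕ):ℝ) ^ (-(2 * σ))) :=
        (Nat.Primes.summable_rpow.2 (by linarith)).mul_left _
      refine Summable.of_nonneg_of_le (fun _ => abs_nonneg _) (fun p => ?_) hb
      obtain ⟨h1, h2, h3⟩ := prime_x p hσ0
      rw [piFactor_form f p p.2.pos σ, add_sub_cancel_left]
      refine (aux_bound (fun k => (f ((p:ℕ) ^ k) : ℝ)) _ (habs p) h1 (h2.trans_lt h3)).trans ?_
      have e : ((p:ℕ):ℝ) ^ (-(2 * σ)) = (((p:ℕ):ℝ) ^ (-σ)) ^ 2 := by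
        rw [← Real.rpow_natCast, ← Real.rpow_mul (by positivity)]
        congr 1; push_cast; ring
      rw [e, mul_right_comm]
      have : 0 < 1 - (2:ℝ) ^ (-σ) := by linarith
      gcongr
    have hpos : ∀ p : Nat.Primes, 0 < piFactor f (p : ℕ) σ := by
      intro p
      obtain ⟨h1, h2, h3⟩ := prime_x p hσ0
      rw [hfac p σ hσ0]
      apply mul_pos
      · have := (abs_le.1 (hfx p σ hσ0)).2
        linarith
      · rcases p.2.two_le.eq_or_lt with hp | hp
        · refine aux_pos2 (fun k => (f ((p:ℕ) ^ k) : ℝ)) _ (hz p) (habs p) m hm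
            (by simp [← hp, hfm]) h1 (h2.trans_lt (lt_trans ?_ hs2))
          exact Real.rpow_lt_rpow_of_exponent_lt (by norm_num) (by linarith)
        · refine aux_pos1 (fun k => (f ((p:ℕ) ^ k) : ℝ)) _ (hz p) (habs p) h1 ?_
          have hp3 : (3:ℝ) ≤ (p:ℕ) := by exact_mod_cast hp
          calc ((p:ℕ):ℝ) ^ (-σ) ≤ (3:ℝ) ^ (-σ) :=
                Real.rpow_le_rpow_of_nonpos (by norm_num) hp3 (by linarith)
            _ < 3 ^ (-s) := Real.rpow_lt_rpow_of_exponent_lt (by norm_num) (by linarith)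
            _ < 1 / 2 := hs3
    have hsum' : Summable (fun p : Nat.Primes => piFactor f (p : ℕ) σ - 1) := hsum.of_abs
    have hlog := Real.summable_log_one_add_of_summable hsum'
    have hmul := Real.multipliable_one_add_of_summable hsum'
    simp only [add_sub_cancel] at hlog hmul
    refine ⟨hsum, hmul, hpos, ?_⟩
    rw [← Real.rexp_tsum_eq_tprod hpos hlog]
    exact Real.exp_pos _
  refine ⟨s, ⟨by linarith, hs1⟩, hpart1, ?_⟩
  intro σ hσ
  have hσ0 : 0 < σ := by linarith
  obtain ⟨-, hmul, -, -⟩ := hpart1 σ (by linarith)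
  -- the Euler product
  let g : ℕ → ℝ := fun n => if n = 0 then 0 else (f n : ℝ) * (n : ℝ) ^ (-σ)
  have hgs : Summable (fun n => ‖g n‖) := by
    refine Summable.of_nonneg_of_le (fun _ => norm_nonneg _) (fun n => ?_)
      (Real.summable_nat_rpow.2 (show -σ < -1 by linarith))
    by_cases hn : n = 0
    · simp only [g, hn, if_true, norm_zero]; positivity
    · simp only [g, hn, if_false, Real.norm_eq_abs, abs_mul]
      rw [abs_of_nonneg (Real.rpow_nonneg (Nat.cast_nonneg n) _)]
      exact mul_le_of_le_one_left (by positivity) (abs_le_one_of f hfpm _ (by omega))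
  have hg0 : g 0 = 0 := by simp [g]
  have hg1 : g 1 = 1 := by simp [g, hf1]
  have hgm : ∀ {a b : ℕ}, Nat.Coprime a b → g (a * b) = g a * g b := by
    intro a b hab
    by_cases ha : a = 0
    · simp [g, ha]
    by_cases hb : b = 0
    · simp [g, hb]
    simp only [g, ha, hb, mul_eq_zero, or_self, if_false, hfmul a b hab]
    push_cast
    rw [Real.mul_rpow (by positivity) (by positivity)]; ring
  have hE := EulerProduct.eulerProduct_tprod hg1 hgm hgs hg0
  have hL : (∑' n : ℕ, (f (n + 1) : ℝ) / ((n : ℝ) + 1) ^ σ) = ∑' n, g n := by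
    rw [hgs.of_norm.tsum_eq_zero_add, hg0, zero_add]
    congr 1; ext n
    simp only [g, Nat.succ_ne_zero, if_false]
    rw [Real.rpow_neg (by positivity), div_eq_mul_inv]
    push_cast; rfl
  have hu : ∀ p : Nat.Primes, (f (p : ℕ) : ℝ) / (p : ℝ) ^ σ = (f (p:ℕ) : ℝ) * ((p:ℕ):ℝ) ^ (-σ) := by
    intro p
    rw [Real.rpow_neg (by positivity), div_eq_mul_inv]
  have hne : ∀ p : Nat.Primes, 0 < 1 - (f (p:ℕ) : ℝ) * ((p:ℕ):ℝ) ^ (-σ) ∧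
      1 - (2:ℝ) ^ (-σ) ≤ 1 - (f (p:ℕ) : ℝ) * ((p:ℕ):ℝ) ^ (-σ) := by
    intro p
    obtain ⟨h1, h2, h3⟩ := prime_x p hσ0
    have := (abs_le.1 (hfx p σ hσ0)).2
    constructor <;> linarith
  have hmul2 : Multipliable (fun p : Nat.Primes => (1 - (f (p : ℕ) : ℝ) / (p : ℝ) ^ σ)⁻¹) := by
    have hb : Summable (fun p : Nat.Primes => ((p:ℕ):ℝ) ^ (-σ) * (1 - (2:ℝ) ^ (-σ))⁻¹) :=
      (Nat.Primes.summable_rpow.2 (by linarith)).mul_right _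
    have hsum2 : Summable (fun p : Nat.Primes => (f (p:ℕ) : ℝ) * ((p:ℕ):ℝ) ^ (-σ) *
        (1 - (f (p:ℕ) : ℝ) * ((p:ℕ):ℝ) ^ (-σ))⁻¹) := by
      refine Summable.of_norm_bounded hb (fun p => ?_)
      obtain ⟨h1, h2, h3⟩ := prime_x p hσ0
      obtain ⟨h4, h5⟩ := hne p
      rw [norm_mul, norm_inv, Real.norm_eq_abs, Real.norm_eq_abs, abs_of_pos h4]
      have : 0 < 1 - (2:ℝ) ^ (-σ) := by linarith
      exact mul_le_mul (hfx p σ hσ0) (inv_anti₀ this h5) (by positivity) h1.le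
    have := Real.multipliable_one_add_of_summable hsum2
    refine this.congr (fun p => ?_)
    rw [hu p]
    have := (hne p).1.ne'
    field_simp
    ring
  rw [hL, ← hE, ← hmul.tprod_mul hmul2]
  refine tprod_congr (fun p => ?_)
  rw [hfac p σ hσ0, hu p, mul_right_comm, mul_inv_cancel₀ (hne p).1.ne', one_mul]
  congr 1; ext k
  simp only [g, pow_eq_zero_iff', p.2.ne_zero, false_and, if_false]
  push_cast
  rw [← Real.rpow_natCast, ← Real.rpow_natCast, ← Real.rpow_mul (by positivity), ← Real.rpow_mul (by positivity), mul_comm (k:ℝ)]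
end

section
/- Let f : ℕ → ℤ be a completely multiplicative function taking values in {-1, 1}. If ∑_{p ≤ x} f(p)/p → ∞ as x → ∞ (the sum over primes p), then the partial sums of f are unbounded: lim sup_{N→∞} |∑_{n=1}^{N} f(n)| = ∞. -/
lemma abel_lower (a w : ℕ → ℝ) (c : ℝ) (hc : 0 ≤ c) (hw : Antitone w) (hw0 : ∀ n, 0 ≤ w n)
    (ha : ∀ k, -c ≤ ∑ i ∈ Finset.range k, a i) (n : ℕ) :
    -(c * w 0) ≤ ∑ i ∈ Finset.range n, a i * w i := by
  have key : ∀ n, (∑ i ∈ Finset.range (n+1), a i) * w n - c * (w 0 - w n)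
      ≤ ∑ i ∈ Finset.range (n+1), a i * w i := by
    intro n
    induction n with
    | zero => simp
    | succ n ih =>
      rw [Finset.sum_range_succ _ (n+1), Finset.sum_range_succ _ (n+1)]
      have h1 := hw (Nat.le_succ n)
      have h2 := ha (n+1)
      simp only [Nat.succ_eq_add_one] at h1
      nlinarith [mul_nonneg (by linarith : 0 ≤ (∑ i ∈ Finset.range (n+1), a i) + c)
        (sub_nonneg.2 h1)]
  rcases n with _ | n
  · simpa using mul_nonneg hc (hw0 0)
  · have := key n
    nlinarith [mul_nonneg (by linarith [ha (n+1)] : 0 ≤ (∑ i ∈ Finset.range (n+1), a i) + c)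
        (hw0 n)]

lemma antitone_w (M : ℕ) (hM : 1 ≤ M) (δ : ℝ) (hδ : 0 ≤ δ) :
    Antitone (fun i : ℕ => ((M + i : ℕ) : ℝ) ^ (-δ)) := by
  intro i j hij
  apply Real.rpow_le_rpow_of_nonpos
  · exact_mod_cast (by omega : 0 < M + i)
  · exact_mod_cast (by omega : M + i ≤ M + j)
  · linarith

/-- If `f` is completely multiplicative with values in `{-1, 1}` and
`∑_{p ≤ x} f p / p → ∞`, then the partial sums of `f` are unbounded. -/
theorem stmt_15 (f : ℕ → ℤ)
    (hf1 : f 1 = 1)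
    (hfmul : ∀ a b : ℕ, f (a * b) = f a * f b)
    (hfpm : ∀ n : ℕ, 1 ≤ n → f n = 1 ∨ f n = -1)
    (hdiv : Filter.Tendsto (fun N : ℕ => ∑ p ∈ N.primesBelow, (f p : ℝ) / p)
      Filter.atTop Filter.atTop) :
    ∀ C : ℝ, ∃ N : ℕ, C < |((∑ n ∈ Finset.Icc 1 N, f n : ℤ) : ℝ)| := by
  intro C
  by_contra! hC
  have hC0 : 0 ≤ C := (abs_nonneg _).trans (hC 0)
  set a : ℕ → ℝ := fun n => if n.Prime then (f n : ℝ) / n else 0 with ha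
  have hpb : ∀ (N : ℕ) (w : ℕ → ℝ), ∑ p ∈ N.primesBelow, (f p : ℝ) / p * w p
      = ∑ n ∈ Finset.range N, a n * w n := by
    intro N w
    simp only [ha, Nat.primesBelow, Finset.sum_filter, ite_mul, zero_mul]
  have hdiv' : Filter.Tendsto (fun N : ℕ => ∑ n ∈ Finset.range N, a n)
      Filter.atTop Filter.atTop := by
    refine hdiv.congr fun N => ?_
    simpa using hpb N (fun _ => 1)
  obtain ⟨M0, hM0⟩ := Filter.eventually_atTop.1 (hdiv'.eventually_ge_atTop (C + 1))
  set M := M0 + 1 with hMdef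
  have hM : ∀ k, C + 1 ≤ ∑ n ∈ Finset.range (M + k), a n := fun k => hM0 _ (by omega)
  -- choose δ
  have hcont : Filter.Tendsto (fun δ : ℝ => ∑ n ∈ Finset.range M, a n * (n : ℝ) ^ (-δ))
      (nhdsWithin 0 (Set.Ioi 0)) (nhds (∑ n ∈ Finset.range M, a n)) := by
    refine tendsto_finsetSum _ fun n _ => ?_
    by_cases hn : n.Prime
    · have : Continuous (fun δ : ℝ => a n * (n : ℝ) ^ (-δ)) := by
        refine continuous_const.mul (Continuous.rpow continuous_const continuous_neg ?_)
        intro x; left; exact_mod_cast hn.ne_zero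
      have h := this.tendsto 0
      simp only [neg_zero, Real.rpow_zero, mul_one] at h
      exact h.mono_left nhdsWithin_le_nhds
    · simp [ha, hn]
  obtain ⟨δ, hδ1, hδ⟩ := ((hcont.eventually (lt_mem_nhds (sub_one_lt _))).and
    self_mem_nhdsWithin).exists
  have hδ0 : 0 < δ := hδ
  -- lower bound for prime sums
  have hlow : ∀ j, C ≤ ∑ p ∈ (M + j).primesBelow, (f p : ℝ) / p * (p : ℝ) ^ (-δ) := by
    intro j
    rw [hpb (M + j) (fun p => (p : ℝ) ^ (-δ)), Finset.sum_range_add]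
    have hA := hM 0
    simp only [add_zero] at hA
    have h := abel_lower (fun i => a (M + i)) (fun i : ℕ => ((M + i : ℕ) : ℝ) ^ (-δ))
      (∑ n ∈ Finset.range M, a n - (C + 1)) (by linarith) (antitone_w M (by omega) δ hδ0.le)
      (fun n => by positivity)
      (fun k => by have := hM k; rw [Finset.sum_range_add] at this; linarith) j
    have hw : ((M + 0 : ℕ) : ℝ) ^ (-δ) ≤ 1 := by
      apply Real.rpow_le_one_of_one_le_of_nonpos
      · exact_mod_cast (by omega : 1 ≤ M + 0)
      · linarith
    have := mul_le_mul_of_nonneg_left hw (by linarith : 0 ≤ ∑ n ∈ Finset.range M, a n - (C + 1))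
    linarith
  -- the Dirichlet series
  let g : ℕ →*₀ ℝ :=
    { toFun := fun n => (f n : ℝ) * (n : ℝ) ^ (-(1 + δ))
      map_zero' := by
        simp
        right; rw [Real.zero_rpow (by linarith)]
      map_one' := by simp [hf1]
      map_mul' := fun x y => by
        rw [hfmul]; push_cast
        rw [Real.mul_rpow (by positivity) (by positivity)]; ring }
  have hgdef : ∀ n, g n = (f n : ℝ) * (n : ℝ) ^ (-(1 + δ)) := fun n => rfl
  have hfabs : ∀ n, 1 ≤ n → |(f n : ℝ)| = 1 := by
    intro n hn
    rcases hfpm n hn with h | h <;> simp [h]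
  have hgnorm : ∀ n, ‖g n‖ = (n : ℝ) ^ (-(1 + δ)) := by
    intro n
    rcases Nat.eq_zero_or_pos n with rfl | hn
    · rw [map_zero, Nat.cast_zero, Real.zero_rpow (by linarith), norm_zero]
    · rw [hgdef, norm_mul, Real.norm_eq_abs, hfabs n hn, one_mul, Real.norm_of_nonneg (by positivity)]
  have hsum : Summable (fun n => ‖g n‖) := by
    simp only [hgnorm]
    exact Real.summable_nat_rpow.2 (by linarith)
  have hup : ∑' n, g n ≤ C := by
    have ht := (hsum.of_norm.hasSum.tendsto_sum_nat).comp (Filter.tendsto_add_atTop_nat 1)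
    refine le_of_tendsto' ht fun n => ?_
    simp only [Function.comp, Finset.sum_range_succ', map_zero, add_zero]
    have h := abel_lower (fun i => -(f (1 + i) : ℝ)) (fun i : ℕ => ((1 + i : ℕ) : ℝ) ^ (-(1 + δ)))
      C hC0 (antitone_w 1 le_rfl (1 + δ) (by linarith)) (fun n => by positivity)
      (fun k => by
        have h1 := (abs_le.1 (hC k)).2
        have h2 : ∑ n ∈ Finset.Icc 1 k, f n = ∑ i ∈ Finset.range k, f (1 + i) := by
          rw [← Finset.Ico_add_one_right_eq_Icc, Finset.sum_Ico_eq_sum_range]; rfl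
        rw [h2] at h1
        push_cast at h1
        rw [Finset.sum_neg_distrib]; linarith) n
    simp only [neg_mul, Finset.sum_neg_distrib] at h
    simp only [hgdef]
    simp only [add_zero, Nat.cast_one, Real.one_rpow, mul_one] at h
    simp only [add_comm _ 1] at h ⊢
    linarith
  have hprod := EulerProduct.eulerProduct_completely_multiplicative hsum
  have hge : Real.exp C ≤ ∑' n, g n := by
    refine ge_of_tendsto hprod (Filter.eventually_atTop.2 ⟨M, fun N hN => ?_⟩)
    obtain ⟨j, rfl⟩ := Nat.exists_eq_add_of_le hN
    have h1 : Real.exp C ≤ Real.exp (∑ p ∈ (M + j).primesBelow, g p) := by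
      apply Real.exp_le_exp.2
      refine (hlow j).trans_eq (Finset.sum_congr rfl fun p hp => ?_)
      have hp := (Nat.prime_of_mem_primesBelow hp).pos
      rw [hgdef, neg_add, Real.rpow_add (by exact_mod_cast hp), Real.rpow_neg_one]
      ring
    refine h1.trans ?_
    rw [Real.exp_sum]
    refine Finset.prod_le_prod (fun _ _ => (Real.exp_pos _).le) fun p hp => ?_
    have hp := (Nat.prime_of_mem_primesBelow hp).one_lt
    have h2 : g p < 1 := by
      refine (le_abs_self _).trans_lt ?_
      rw [← Real.norm_eq_abs, hgnorm]
      exact Real.rpow_lt_one_of_one_lt_of_neg (by exact_mod_cast hp) (by linarith)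
    have h3 := Real.add_one_le_exp (-(g p))
    rw [Real.exp_neg] at h3
    rw [le_inv_comm₀ (Real.exp_pos _) (by linarith)]
    linarith
  linarith [Real.add_one_le_exp C]
end

section
/- Let f : ℕ → ℤ be a completely multiplicative function taking values in {-1, 1}. If ∑_{p ≤ x} f(p)/p → -∞ as x → ∞ (the sum over primes p), then the partial sums of μ·f are unbounded: lim sup_{N→∞} |∑_{n=1}^{N} μ(n) f(n)| = ∞, where μ is the Möbius function. -/
/-- Abel summation identity. -/
theorem abel_identity (w a : ℕ → ℝ) (n : ℕ) :
    ∑ i ∈ Finset.range n, w i * a i = w n * ∑ i ∈ Finset.range n, a i +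
      ∑ i ∈ Finset.range n, (w i - w (i + 1)) * ∑ j ∈ Finset.range (i + 1), a j := by
  induction n with
  | zero => simp
  | succ k ih =>
    rw [Finset.sum_range_succ, ih, Finset.sum_range_succ (n := k) (f := fun i => (w i - w (i + 1)) * _),
      Finset.sum_range_succ a k]
    ring

theorem abel_bound (w a : ℕ → ℝ) (hw : Antitone w) (hw0 : ∀ i, 0 ≤ w i) (B : ℝ)
    (hA : ∀ n, ∑ i ∈ Finset.range n, a i ≤ B) (n : ℕ) :
    ∑ i ∈ Finset.range n, w i * a i ≤ w 0 * B := by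
  rw [abel_identity]
  have h1 : w n * ∑ i ∈ Finset.range n, a i ≤ w n * B :=
    mul_le_mul_of_nonneg_left (hA n) (hw0 n)
  have h2 : ∑ i ∈ Finset.range n, (w i - w (i + 1)) * ∑ j ∈ Finset.range (i + 1), a j ≤
      ∑ i ∈ Finset.range n, (w i - w (i + 1)) * B :=
    Finset.sum_le_sum fun i _ =>
      mul_le_mul_of_nonneg_left (hA _) (sub_nonneg.2 (hw (Nat.le_succ i)))
  rw [← Finset.sum_mul, Finset.sum_range_sub'] at h2
  linarith

theorem antitone_weight (k : ℕ) (hk : 1 ≤ k) (s : ℝ) (hs : 0 ≤ s) :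
    Antitone (fun i : ℕ => ((k + i : ℕ) : ℝ) ^ (-s)) := by
  intro i j hij
  apply Real.rpow_le_rpow_of_nonpos
  · exact_mod_cast (by omega : 0 < k + i)
  · exact_mod_cast (by omega : k + i ≤ k + j)
  · linarith

/-- The weighted sums become very negative for small `δ`. -/
theorem weighted_neg (a : ℕ → ℝ) (ha0 : a 0 = 0)
    (h : Filter.Tendsto (fun N : ℕ => ∑ p ∈ Finset.range N, a p) Filter.atTop Filter.atBot)
    (M : ℝ) : ∃ δ : ℝ, 0 < δ ∧ ∃ n0 : ℕ, ∀ n, n0 ≤ n →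
      ∑ i ∈ Finset.range n, (i : ℝ) ^ (-δ) * a i ≤ -M + 1 := by
  obtain ⟨n1, hn1⟩ := Filter.eventually_atTop.1 (h.eventually (Filter.eventually_le_atBot (-M)))
  set k := n1 + 1 with hk
  set A := ∑ p ∈ Finset.range k, a p with hA
  have hcont : Filter.Tendsto (fun δ : ℝ => ∑ i ∈ Finset.range k, (i : ℝ) ^ (-δ) * a i +
      (k : ℝ) ^ (-δ) * (-M - A)) (nhdsWithin 0 (Set.Ioi 0)) (nhds (A + 1 * (-M - A))) := by
    have hb : ∀ i : ℕ, 1 ≤ i → Filter.Tendsto (fun δ : ℝ => (i : ℝ) ^ (-δ))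
        (nhdsWithin 0 (Set.Ioi 0)) (nhds 1) := by
      intro i hi
      have : Continuous (fun δ : ℝ => (i : ℝ) ^ (-δ)) := by
        apply Continuous.rpow continuous_const continuous_neg
        intro x; left; exact_mod_cast (by omega : i ≠ 0)
      have h2 := this.tendsto 0
      simp only [neg_zero, Real.rpow_zero] at h2
      exact h2.mono_left nhdsWithin_le_nhds
    refine Filter.Tendsto.add ?_ ((hb k (by omega)).mul_const _)
    rw [hA]
    apply tendsto_finsetSum
    intro i _
    rcases Nat.eq_zero_or_pos i with rfl | hi
    · simp [ha0]
    · simpa using (hb i hi).mul_const (a i)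
  have hev := hcont.eventually (Filter.Tendsto.eventually_le_const (u := -M + 1) (by linarith) Filter.tendsto_id)
  obtain ⟨δ, hδ, hδ0⟩ := (hev.and self_mem_nhdsWithin).exists
  refine ⟨δ, hδ0, k, fun n hn => ?_⟩
  obtain ⟨m, rfl⟩ := Nat.exists_eq_add_of_le hn
  rw [Finset.sum_range_add]
  have := abel_bound (fun i : ℕ => ((k + i : ℕ) : ℝ) ^ (-δ)) (fun i => a (k + i))
    (antitone_weight k (by omega) δ (le_of_lt hδ0)) (fun i => by positivity) (-M - A) (fun n => by
      have h1 := hn1 (k + n) (by omega)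
      rw [Finset.sum_range_add] at h1
      linarith) m
  simp only [add_zero, id] at this hδ
  linarith

theorem log_lower (x : ℝ) (hx : x ≤ 1 / 2) : Real.exp (-x - 2 * x ^ 2) ≤ 1 - x := by
  have h1 : 0 < 1 - x := by linarith
  have h := Real.one_sub_inv_le_log_of_pos h1
  rw [← Real.le_log_iff_exp_le h1]
  refine le_trans ?_ h
  have : 1 - (1 - x)⁻¹ - (-x - 2 * x ^ 2) = x ^ 2 * (1 - 2 * x) * (1 - x)⁻¹ := by
    field_simp
    ring
  have h3 : 0 ≤ x ^ 2 * (1 - 2 * x) * (1 - x)⁻¹ := by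
    have : 0 ≤ 1 - 2 * x := by linarith
    positivity
  linarith

/-- If `f` is completely multiplicative with values in `{-1, 1}` and
`∑_{p ≤ x} f p / p → -∞`, then the partial sums of `μ·f` are unbounded. -/
theorem stmt_16 (f : ℕ → ℤ)
    (hf1 : f 1 = 1)
    (hfmul : ∀ a b : ℕ, f (a * b) = f a * f b)
    (hfpm : ∀ n : ℕ, 1 ≤ n → f n = 1 ∨ f n = -1)
    (hdiv : Filter.Tendsto (fun N : ℕ => ∑ p ∈ N.primesBelow, (f p : ℝ) / p)
      Filter.atTop Filter.atBot) :
    ∀ C : ℝ, ∃ N : ℕ,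
      C < |((∑ n ∈ Finset.Icc 1 N, ArithmeticFunction.moebius n * f n : ℤ) : ℝ)| := by
  intro C
  by_contra! hC
  have hfabs : ∀ n : ℕ, 1 ≤ n → |(f n : ℝ)| = 1 := by
    intro n hn
    rcases hfpm n hn with h | h <;> simp [h]
  have hsq : Summable (fun n : ℕ => 1 / (n : ℝ) ^ 2) :=
    Real.summable_one_div_nat_pow.2 (by norm_num)
  set K := ∑' n : ℕ, 1 / (n : ℝ) ^ 2 with hK
  obtain ⟨δ, hδ, n0, hn0⟩ := weighted_neg (fun p => if p.Prime then (f p : ℝ) / p else 0)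
    (by simp) (by simpa only [Nat.primesBelow, Finset.sum_filter] using hdiv) (C + 1 + 2 * K)
  set s := 1 + δ with hs
  let h : ℕ → ℝ := fun n => (n : ℝ) ^ (-s) * ((ArithmeticFunction.moebius n * f n : ℤ) : ℝ)
  have hh1 : h 1 = 1 := by simp [h, hf1]
  have hh0 : h 0 = 0 := by simp [h]
  have hmul : ∀ {m n : ℕ}, m.Coprime n → h (m * n) = h m * h n := by
    intro m n hmn
    simp only [h]
    rw [ArithmeticFunction.isMultiplicative_moebius.map_mul_of_coprime hmn, hfmul]
    push_cast
    rw [Real.mul_rpow (by positivity) (by positivity)]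
    ring
  have hsum : Summable (fun n => ‖h n‖) := by
    refine Summable.of_nonneg_of_le (fun n => norm_nonneg _) (fun n => ?_)
      (Real.summable_nat_rpow.2 (by linarith : -s < -1))
    rcases Nat.eq_zero_or_pos n with rfl | hn
    · rw [hh0]; simp; positivity
    · simp only [h]
      rw [norm_mul, Real.norm_of_nonneg (by positivity)]
      have h1 : ‖((ArithmeticFunction.moebius n * f n : ℤ) : ℝ)‖ ≤ 1 := by
        rw [Real.norm_eq_abs]
        push_cast
        rw [abs_mul, hfabs n hn, mul_one]
        exact_mod_cast ArithmeticFunction.abs_moebius_le_one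
      exact mul_le_of_le_one_right (by positivity) h1
  have hE := EulerProduct.eulerProduct hh1 hmul hsum hh0
  have hfac : ∀ p : ℕ, p.Prime → ∑' e, h (p ^ e) = 1 - (p : ℝ) ^ (-s) * f p := by
    intro p hp
    rw [tsum_eq_sum (s := Finset.range 2)]
    · rw [Finset.sum_range_succ, Finset.sum_range_one, pow_zero, pow_one, hh1]
      simp only [h]
      rw [ArithmeticFunction.moebius_apply_prime hp]
      push_cast
      ring
    · intro e he
      have he2 : 2 ≤ e := by
        rw [Finset.mem_range] at he
        omega
      simp only [h]
      rw [ArithmeticFunction.moebius_apply_prime_pow hp (by omega), if_neg (by omega)]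
      simp
  -- upper bound
  have hup : ∑' n, h n ≤ C := by
    have ht := (hsum.of_norm).hasSum.tendsto_sum_nat.comp (Filter.tendsto_add_atTop_nat 1)
    refine le_of_tendsto' ht fun n => ?_
    simp only [Function.comp]
    rw [Finset.sum_range_succ', hh0, add_zero]
    have := abel_bound (fun i : ℕ => ((1 + i : ℕ) : ℝ) ^ (-s))
      (fun i => ((ArithmeticFunction.moebius (1 + i) * f (1 + i) : ℤ) : ℝ))
      (antitone_weight 1 le_rfl s (by linarith)) (fun i => by positivity) C (fun n => by
        have h1 := (le_abs_self _).trans (hC n)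
        refine le_trans (le_of_eq ?_) h1
        push_cast
        rw [← Finset.Ico_add_one_right_eq_Icc, Finset.sum_Ico_eq_sum_range]
        simp) n
    simp only [add_zero, Nat.cast_one, Real.one_rpow, one_mul] at this
    refine le_trans (le_of_eq ?_) this
    refine Finset.sum_congr rfl fun i _ => ?_
    simp only [h, add_comm]
  -- lower bound
  have hlow : Real.exp C ≤ ∑' n, h n := by
    refine ge_of_tendsto hE ?_
    filter_upwards [Filter.eventually_ge_atTop n0] with n hn
    have hprod : ∏ p ∈ n.primesBelow, ∑' e, h (p ^ e) ≥ ∏ p ∈ n.primesBelow,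
        Real.exp (-((p : ℝ) ^ (-s) * f p) - 2 * (1 / (p : ℝ) ^ 2)) := by
      refine Finset.prod_le_prod (fun _ _ => (Real.exp_pos _).le) fun p hp => ?_
      have hp' := Nat.prime_of_mem_primesBelow hp
      rw [hfac p hp']
      have hp2 : (2 : ℝ) ≤ p := by exact_mod_cast hp'.two_le
      have hle : (p : ℝ) ^ (-s) ≤ 1 / p := by
        have := Real.rpow_le_rpow_of_exponent_le (by linarith : (1 : ℝ) ≤ p) (by linarith : -s ≤ -1)
        rwa [Real.rpow_neg_one, ← one_div] at this
      have habs : |(p : ℝ) ^ (-s) * f p| ≤ 1 / p := by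
        rw [abs_mul, hfabs p hp'.one_le, mul_one, abs_of_nonneg (by positivity)]
        exact hle
      have hhalf : (1 : ℝ) / p ≤ 1 / 2 := one_div_le_one_div_of_le (by norm_num) hp2
      refine le_trans ?_ (log_lower _ (((le_abs_self _).trans habs).trans hhalf))
      apply Real.exp_le_exp.2
      have h4 : ((p : ℝ) ^ (-s) * f p) ^ 2 ≤ 1 / (p : ℝ) ^ 2 := by
        rw [← sq_abs, ← one_div_pow]
        exact pow_le_pow_left₀ (abs_nonneg _) habs 2
      linarith
    refine le_trans ?_ hprod
    rw [← Real.exp_sum]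
    apply Real.exp_le_exp.2
    rw [Finset.sum_sub_distrib, Finset.sum_neg_distrib, ← Finset.mul_sum]
    have h5 : ∑ p ∈ n.primesBelow, 1 / (p : ℝ) ^ 2 ≤ K :=
      hsq.sum_le_tsum _ (fun i _ => by positivity)
    have h6 := hn0 n hn
    have h7 : ∑ p ∈ n.primesBelow, (p : ℝ) ^ (-s) * f p =
        ∑ i ∈ Finset.range n, (i : ℝ) ^ (-δ) * (if i.Prime then (f i : ℝ) / i else 0) := by
      rw [Nat.primesBelow, Finset.sum_filter]
      refine Finset.sum_congr rfl fun p _ => ?_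
      split_ifs with hp
      · have hp0 : (0 : ℝ) < p := by exact_mod_cast hp.pos
        rw [hs, show -(1 + δ) = -δ + -1 by ring, Real.rpow_add hp0, Real.rpow_neg_one]
        ring
      · simp
    rw [h7]
    linarith
  have := Real.add_one_le_exp C
  linarith
end
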